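/- If f and g are convenient and Newton nondegenerate polynomials in ℬ having the same Newton polytope P, then for every α ∈ ℚ one has dim_ℂ gr^𝒩_α(ℬ/ℒ(f)) = dim_ℂ gr^𝒩_α(ℬ/ℒ(g)), where ℒ(f) (resp. ℒ(g)) is the ideal generated by u₁ ∂f/∂u₁,…,uₙ ∂f/∂uₙ (resp. u₁ ∂g/∂u₁,…,uₙ ∂g/∂uₙ). In other words, the toric Newton spectrum of a convenient and Newton nondegenerate polynomial depends only on its Newton polytope. -/

import Mathlib

open MvPolynomial

namespace ToricNewton

section
variable {σ : Type*} [Fintype σ] [DecidableEq σ]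

/-- Coercion of a lattice point of `ℕ^σ` into `ℝ^σ`. -/
def natToR (v : σ → ℕ) : σ → ℝ := fun i => (v i : ℝ)

/-- Coercion of an exponent (finitely supported) into `ℝ^σ`. -/
def toR (m : σ →₀ ℕ) : σ → ℝ := fun i => (m i : ℝ)

/-- The Newton polytope of a polynomial: the convex hull of `{0} ∪ supp f`. -/
noncomputable def newtonPolytope (f : MvPolynomial σ ℂ) : Set (σ → ℝ) :=
  convexHull ℝ ({0} ∪ (toR '' (f.support : Set (σ →₀ ℕ))))

/-- The Newton function `ν`, which for a convenient polynomial is the gauge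
(Minkowski functional) of the Newton polytope. -/
noncomputable def nu (f : MvPolynomial σ ℂ) (x : σ → ℝ) : ℝ :=
  gauge (newtonPolytope f) x

/-- `f` is convenient if for each variable `i` some pure power `uᵢ^k`, `k ≥ 1`,
occurs in `f` with nonzero coefficient. -/
def Convenient (f : MvPolynomial σ ℂ) : Prop :=
  ∀ i : σ, ∃ k : ℕ, 1 ≤ k ∧ f.coeff (Finsupp.single i k) ≠ 0

/-- `Δ` is a (nonempty exposed) closed face of `P`. -/
def IsFace (P Δ : Set (σ → ℝ)) : Prop :=
  Δ.Nonempty ∧ ∃ (l : (σ → ℝ) →ₗ[ℝ] ℝ) (c : ℝ),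
    (∀ x ∈ P, l x ≤ c) ∧ Δ = {x ∈ P | l x = c}

/-- A face of the Newton boundary: a closed face of the Newton polytope not
containing the origin. -/
def NBFace (f : MvPolynomial σ ℂ) (Δ : Set (σ → ℝ)) : Prop :=
  IsFace (newtonPolytope f) Δ ∧ (0 : σ → ℝ) ∉ Δ

open Classical in
/-- The truncation `g_Δ` of `g` to the monomials whose exponents lie in `Δ`. -/
noncomputable def faceRestrict (Δ : Set (σ → ℝ)) (g : MvPolynomial σ ℂ) : MvPolynomial σ ℂ :=
  ∑ m ∈ g.support, if toR m ∈ Δ then monomial m (g.coeff m) else 0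

/-- `f` is Newton nondegenerate: for every closed face `Δ` of the Newton boundary
the system `(u₁ ∂f/∂u₁)_Δ = ⋯ = (uₙ ∂f/∂uₙ)_Δ = 0` has no solution in `(ℂ*)ⁿ`. -/
def Nondegenerate (f : MvPolynomial σ ℂ) : Prop :=
  ∀ Δ : Set (σ → ℝ), NBFace f Δ →
    ¬ ∃ x : σ → ℂ, (∀ i, x i ≠ 0) ∧
        ∀ i, eval x (faceRestrict Δ (X i * pderiv i f)) = 0

/-- The ideal `ℒ` generated by the `uᵢ ∂f/∂uᵢ`. -/
noncomputable def LIdeal (f : MvPolynomial σ ℂ) : Ideal (MvPolynomial σ ℂ) :=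
  Ideal.span (Set.range fun i => X i * pderiv i f)

/-- The Jacobian ideal `ℐ` generated by the `∂f/∂uᵢ`. -/
noncomputable def IIdeal (f : MvPolynomial σ ℂ) : Ideal (MvPolynomial σ ℂ) :=
  Ideal.span (Set.range fun i => pderiv i f)

/-- The Newton filtration `𝒩_α ℬ`: the span of the monomials `u^m` with `ν(m) ≤ α`. -/
noncomputable def Nle (f : MvPolynomial σ ℂ) (α : ℝ) : Submodule ℂ (MvPolynomial σ ℂ) where
  carrier := {g | ∀ m ∈ g.support, nu f (toR m) ≤ α}
  zero_mem' := by simp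
  add_mem' := by
    intro a b ha hb m hm
    rcases Finset.mem_union.mp (MvPolynomial.support_add hm) with h | h
    · exact ha m h
    · exact hb m h
  smul_mem' := by
    intro c a ha m hm
    exact ha m (MvPolynomial.support_smul hm)

/-- The filtration `𝒩_{<α} ℬ`. -/
noncomputable def Nlt (f : MvPolynomial σ ℂ) (α : ℝ) : Submodule ℂ (MvPolynomial σ ℂ) where
  carrier := {g | ∀ m ∈ g.support, nu f (toR m) < α}
  zero_mem' := by simp
  add_mem' := by
    intro a b ha hb m hm
    rcases Finset.mem_union.mp (MvPolynomial.support_add hm) with h | h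
    · exact ha m h
    · exact hb m h
  smul_mem' := by
    intro c a ha m hm
    exact ha m (MvPolynomial.support_smul hm)

/-- The twisted filtration `W_α ℬ`: the span of the monomials `u^m` with
`ν(m + (1,…,1)) ≤ α`. -/
noncomputable def Wle (f : MvPolynomial σ ℂ) (α : ℝ) : Submodule ℂ (MvPolynomial σ ℂ) where
  carrier := {g | ∀ m ∈ g.support, nu f (toR m + 1) ≤ α}
  zero_mem' := by simp
  add_mem' := by
    intro a b ha hb m hm
    rcases Finset.mem_union.mp (MvPolynomial.support_add hm) with h | h
    · exact ha m h
    · exact hb m h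
  smul_mem' := by
    intro c a ha m hm
    exact ha m (MvPolynomial.support_smul hm)

/-- The twisted filtration `W_{<α} ℬ`. -/
noncomputable def Wlt (f : MvPolynomial σ ℂ) (α : ℝ) : Submodule ℂ (MvPolynomial σ ℂ) where
  carrier := {g | ∀ m ∈ g.support, nu f (toR m + 1) < α}
  zero_mem' := by simp
  add_mem' := by
    intro a b ha hb m hm
    rcases Finset.mem_union.mp (MvPolynomial.support_add hm) with h | h
    · exact ha m h
    · exact hb m h
  smul_mem' := by
    intro c a ha m hm
    exact ha m (MvPolynomial.support_smul hm)

/-- The graded piece `gr^𝒩_α(ℬ/ℒ) = (𝒩_α ℬ + ℒ)/(𝒩_{<α} ℬ + ℒ)`, realized as the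
image of `𝒩_α ℬ + ℒ` in `ℬ/(𝒩_{<α} ℬ + ℒ)`. -/
noncomputable def grN (f : MvPolynomial σ ℂ) (α : ℝ) :
    Submodule ℂ (MvPolynomial σ ℂ ⧸ (Nlt f α ⊔ (LIdeal f).restrictScalars ℂ)) :=
  Submodule.map (Nlt f α ⊔ (LIdeal f).restrictScalars ℂ).mkQ
    (Nle f α ⊔ (LIdeal f).restrictScalars ℂ)

/-- `dim_ℂ gr^𝒩_α(ℬ/ℒ)`. -/
noncomputable def grDim (f : MvPolynomial σ ℂ) (α : ℝ) : ℕ :=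
  Module.finrank ℂ (grN f α)

/-- The graded piece `gr^W_α(ℬ/ℐ) = (W_α ℬ + ℐ)/(W_{<α} ℬ + ℐ)`. -/
noncomputable def grW (f : MvPolynomial σ ℂ) (α : ℝ) :
    Submodule ℂ (MvPolynomial σ ℂ ⧸ (Wlt f α ⊔ (IIdeal f).restrictScalars ℂ)) :=
  Submodule.map (Wlt f α ⊔ (IIdeal f).restrictScalars ℂ).mkQ
    (Wle f α ⊔ (IIdeal f).restrictScalars ℂ)

/-- `dim_ℂ gr^W_α(ℬ/ℐ)`. -/
noncomputable def grWDim (f : MvPolynomial σ ℂ) (α : ℝ) : ℕ :=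
  Module.finrank ℂ (grW f α)

/-- The dimension of a face, i.e. of the direction of its affine span. -/
noncomputable def faceDim (Δ : Set (σ → ℝ)) : ℕ :=
  Module.finrank ℝ (affineSpan ℝ Δ).direction

/-- `Δ` is a simplex: the convex hull of an affinely independent family. -/
def IsSimplex (Δ : Set (σ → ℝ)) : Prop :=
  ∃ (k : ℕ) (p : Fin (k + 1) → (σ → ℝ)), AffineIndependent ℝ p ∧ Δ = convexHull ℝ (Set.range p)

/-- The union of the coordinate hyperplanes. -/
def coordHyperplanes (σ : Type*) : Set (σ → ℝ) := ⋃ i : σ, {x : σ → ℝ | x i = 0}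

/-- `Box(Δ)`: the set of combinations `Σ q_ℓ b_ℓ`, `q_ℓ ∈ [0,1)`, of the vertices
(extreme points) of `Δ`. -/
def Box (Δ : Set (σ → ℝ)) : Set (σ → ℝ) :=
  {x | ∃ s : Finset (σ → ℝ), ↑s ⊆ Δ.extremePoints ℝ ∧
      ∃ q : (σ → ℝ) → ℝ, (∀ b ∈ s, 0 ≤ q b ∧ q b < 1) ∧ x = ∑ b ∈ s, q b • b}

/-- `Δ ∈ ℱ(P)`: a closed face of the Newton polytope of `f` not contained in the
union of the coordinate hyperplanes. -/
def FcalMem (f : MvPolynomial σ ℂ) (Δ : Set (σ → ℝ)) : Prop :=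
  IsFace (newtonPolytope f) Δ ∧ ¬ Δ ⊆ coordHyperplanes σ

/-- `Box(P)`: the union of `Box(Δ)` over the closed faces of the Newton boundary
not contained in the union of the coordinate hyperplanes. -/
def BoxP (f : MvPolynomial σ ℂ) : Set (σ → ℝ) :=
  ⋃ Δ ∈ {Δ : Set (σ → ℝ) | NBFace f Δ ∧ ¬ Δ ⊆ coordHyperplanes σ}, Box Δ

/-- The cone `ℝ₊·Δ` over `Δ`. -/
def cone0 (Δ : Set (σ → ℝ)) : Set (σ → ℝ) :=
  {x | ∃ t : ℝ, 0 ≤ t ∧ ∃ y ∈ Δ, x = t • y}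

/-- The restriction of `f` obtained by setting the variables in `S` to zero. -/
noncomputable def restrictZero (S : Finset σ) (f : MvPolynomial σ ℂ) :
    MvPolynomial {j : σ // j ∉ S} ℂ :=
  aeval (fun j : σ => if h : j ∉ S then X (⟨j, h⟩ : {j : σ // j ∉ S}) else 0) f

end

end ToricNewton

namespace TNProof

/-- Abstract properties of the Newton function used in the algebraic part. -/
structure NuData {σ : Type*} (ν : (σ →₀ ℕ) → ℝ) (V : Finset (σ →₀ ℕ)) : Prop where
  zero : ν 0 = 0
  nonneg : ∀ m, 0 ≤ ν m
  sub : ∀ a b, ν (a + b) ≤ ν a + ν b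
  bound : ∃ L : ℝ, 0 ≤ L ∧ ∀ m i, (m i : ℝ) ≤ L * ν m
  vone : ∀ v ∈ V, ν v = 1
  step : ∃ C : ℝ, ∀ m, C < ν m → ∃ v ∈ V, ∃ m', m = m' + v ∧ ν m' + 1 ≤ ν m
  lim : ∀ (m a : σ →₀ ℕ) (β C : ℝ),
    (∀ k : ℕ, ∃ q : ℕ, k ≤ q ∧ ν (q • m + a) ≤ q * β + C) → ν m ≤ β

/-- polynomials supported in a set of exponents -/
def SN {σ : Type*} (K : Type*) [CommRing K] (S : Set (σ →₀ ℕ)) :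
    Submodule K (MvPolynomial σ K) where
  carrier := {g | ∀ m ∈ g.support, m ∈ S}
  zero_mem' := by simp
  add_mem' := by
    classical
    intro a b ha hb m hm
    rcases Finset.mem_union.mp (MvPolynomial.support_add hm) with h | h
    · exact ha m h
    · exact hb m h
  smul_mem' := by
    intro c a ha m hm
    exact ha m (MvPolynomial.support_smul hm)

/-- `𝒩_α` -/
def FN {σ : Type*} (K : Type*) [CommRing K] (ν : (σ →₀ ℕ) → ℝ) (α : ℝ) :
    Submodule K (MvPolynomial σ K) := SN K {m | ν m ≤ α}

/-- `𝒩_{<α}` -/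
def FNlt {σ : Type*} (K : Type*) [CommRing K] (ν : (σ →₀ ℕ) → ℝ) (α : ℝ) :
    Submodule K (MvPolynomial σ K) := SN K {m | ν m < α}

section basic
variable {σ τ K : Type*} [CommRing K] {ν : (σ →₀ ℕ) → ℝ} {V : Finset (σ →₀ ℕ)}

lemma mem_SN {S : Set (σ →₀ ℕ)} {g : MvPolynomial σ K} :
    g ∈ SN K S ↔ ∀ m ∈ g.support, m ∈ S := Iff.rfl

lemma mem_FN {α : ℝ} {g : MvPolynomial σ K} :
    g ∈ FN K ν α ↔ ∀ m ∈ g.support, ν m ≤ α := Iff.rfl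

lemma mem_FNlt {α : ℝ} {g : MvPolynomial σ K} :
    g ∈ FNlt K ν α ↔ ∀ m ∈ g.support, ν m < α := Iff.rfl

lemma SN_mono {S T : Set (σ →₀ ℕ)} (h : S ⊆ T) : SN K S ≤ SN K T :=
  fun _ hg m hm => h (hg m hm)

lemma FN_mono {α β : ℝ} (h : α ≤ β) : FN K ν α ≤ FN K ν β :=
  SN_mono fun _ hm => le_trans hm h

lemma FNlt_le {α : ℝ} : FNlt K ν α ≤ FN K ν α :=
  SN_mono fun m (hm : ν m < α) => (le_of_lt hm : ν m ≤ α)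

lemma monomial_mem_SN {S : Set (σ →₀ ℕ)} {m : σ →₀ ℕ} (h : m ∈ S) (c : K) :
    monomial m c ∈ SN K S := by
  classical
  intro m' hm'
  have := MvPolynomial.support_monomial_subset hm'
  rw [Finset.mem_singleton] at this
  rwa [this]

lemma SN_le {S : Set (σ →₀ ℕ)} {Q : Submodule K (MvPolynomial σ K)}
    (h : ∀ m ∈ S, monomial m (1 : K) ∈ Q) : SN K S ≤ Q := by
  intro g hg
  rw [g.as_sum]
  refine Q.sum_mem fun m hm => ?_
  have : monomial m (coeff m g) = coeff m g • monomial m (1 : K) := by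
    rw [smul_monomial]; simp
  rw [this]
  exact Q.smul_mem _ (h m (hg m hm))

lemma mul_mem_SN {S T U : Set (σ →₀ ℕ)} (h : ∀ a ∈ S, ∀ b ∈ T, a + b ∈ U)
    {x y : MvPolynomial σ K} (hx : x ∈ SN K S) (hy : y ∈ SN K T) : x * y ∈ SN K U := by
  classical
  intro m hm
  obtain ⟨a, ha, b, hb, rfl⟩ := Finset.mem_add.mp (MvPolynomial.support_mul x y hm)
  exact h a (hx a ha) b (hy b hb)

lemma mul_mem_FN (hν : NuData ν V) {α β : ℝ}
    {x y : MvPolynomial σ K} (hx : x ∈ FN K ν α) (hy : y ∈ FN K ν β) :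
    x * y ∈ FN K ν (α + β) :=
  mul_mem_SN (fun a ha b hb => (hν.sub a b).trans (add_le_add ha hb)) hx hy

lemma mul_mem_FNlt (hν : NuData ν V) {α β : ℝ}
    {x y : MvPolynomial σ K} (hx : x ∈ FN K ν α) (hy : y ∈ FNlt K ν β) :
    x * y ∈ FNlt K ν (α + β) :=
  mul_mem_SN (fun a ha b hb => (hν.sub a b).trans_lt (add_lt_add_of_le_of_lt ha hb)) hx hy

lemma one_mem_FN (hν : NuData ν V) : (1 : MvPolynomial σ K) ∈ FN K ν 0 :=
  monomial_mem_SN (m := 0) (show ν 0 ≤ 0 from hν.zero.le) 1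

lemma pow_mem_FN (hν : NuData ν V) {α : ℝ} {x : MvPolynomial σ K} (hx : x ∈ FN K ν α) (k : ℕ) :
    x ^ k ∈ FN K ν (k * α) := by
  induction k with
  | zero => simpa using one_mem_FN hν
  | succ k ih =>
    rw [pow_succ]
    have := mul_mem_FN hν ih hx
    rwa [show (k : ℝ) * α + α = ((k + 1 : ℕ) : ℝ) * α by push_cast; ring] at this

/-- `∑_{i ∈ J} h_i 𝒩_γ` -/
def WW (ν : (σ →₀ ℕ) → ℝ) (h : τ → MvPolynomial σ K) (J : Finset τ) (γ : ℝ) :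
    Submodule K (MvPolynomial σ K) where
  carrier := {x | ∃ s : τ → MvPolynomial σ K, (∀ i, s i ∈ FN K ν γ) ∧ x = ∑ i ∈ J, h i * s i}
  zero_mem' := ⟨0, fun _ => Submodule.zero_mem _, by simp⟩
  add_mem' := by
    rintro a b ⟨s, hs, rfl⟩ ⟨t, ht, rfl⟩
    exact ⟨s + t, fun i => Submodule.add_mem _ (hs i) (ht i), by
      simp [mul_add, Finset.sum_add_distrib]⟩
  smul_mem' := by
    rintro c a ⟨s, hs, rfl⟩
    exact ⟨c • s, fun i => Submodule.smul_mem _ _ (hs i), by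
      simp [Finset.smul_sum]⟩

lemma mem_WW {h : τ → MvPolynomial σ K} {J : Finset τ} {γ : ℝ} {x : MvPolynomial σ K} :
    x ∈ WW ν h J γ ↔
      ∃ s : τ → MvPolynomial σ K, (∀ i, s i ∈ FN K ν γ) ∧ x = ∑ i ∈ J, h i * s i := Iff.rfl

lemma mul_mem_WW {h : τ → MvPolynomial σ K} {J : Finset τ} {γ : ℝ} {i : τ} (hi : i ∈ J)
    {s : MvPolynomial σ K} (hs : s ∈ FN K ν γ) : h i * s ∈ WW ν h J γ := by
  classical
  refine ⟨fun k => if k = i then s else 0, fun k => ?_, ?_⟩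
  · dsimp only; split_ifs
    exacts [hs, Submodule.zero_mem _]
  · simp [hi]

lemma WW_mono {h : τ → MvPolynomial σ K} {J J' : Finset τ} {γ γ' : ℝ} (hJ : J ⊆ J') (hg : γ ≤ γ') :
    WW ν h J γ ≤ WW ν h J' γ' := by
  rintro x ⟨s, hs, rfl⟩
  exact Submodule.sum_mem _ fun i hi => mul_mem_WW (hJ hi) (FN_mono hg (hs i))

lemma mul_WW (hν : NuData ν V) {h : τ → MvPolynomial σ K} {J : Finset τ} {γ δ : ℝ}
    {x y : MvPolynomial σ K} (hx : x ∈ FN K ν δ) (hy : y ∈ WW ν h J γ) :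
    x * y ∈ WW ν h J (δ + γ) := by
  obtain ⟨s, hs, rfl⟩ := hy
  rw [Finset.mul_sum]
  refine Submodule.sum_mem _ fun i hi => ?_
  rw [mul_left_comm]
  exact mul_mem_WW hi (mul_mem_FN hν hx (hs i))

lemma WW_le_FN (hν : NuData ν V) {h : τ → MvPolynomial σ K} (hh : ∀ i, h i ∈ FN K ν 1)
    {J : Finset τ} {γ : ℝ} : WW ν h J (γ - 1) ≤ FN K ν γ := by
  rintro x ⟨s, hs, rfl⟩
  refine Submodule.sum_mem _ fun i hi => ?_
  have := mul_mem_FN hν (hh i) (hs i)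
  rwa [add_sub_cancel] at this

/-- finite witness of nondegeneracy -/
def FinV [Fintype τ] (ν : (σ →₀ ℕ) → ℝ) (V : Finset (σ →₀ ℕ)) (h : τ → MvPolynomial σ K)
    (N : ℕ) : Prop :=
  ∀ v ∈ V, ∃ s : τ → MvPolynomial σ K, (∀ i, s i ∈ FN K ν ((N : ℝ) - 1)) ∧
    monomial (N • v) (1 : K) - ∑ i, h i * s i ∈ FNlt K ν N

lemma NuData.sum_le (hν : NuData ν V) (b : (σ →₀ ℕ) → ℕ) :
    ν (∑ v ∈ V, b v • v) ≤ ∑ v ∈ V, (b v : ℝ) := by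
  classical
  have h1 : ∀ v ∈ V, ∀ k : ℕ, ν (k • v) ≤ k := by
    intro v hv k
    induction k with
    | zero => simp [hν.zero]
    | succ k ih =>
      rw [succ_nsmul]
      have := hν.sub (k • v) v
      rw [hν.vone v hv] at this
      push_cast; linarith
  have : ∀ W ⊆ V, ν (∑ v ∈ W, b v • v) ≤ ∑ v ∈ W, (b v : ℝ) := by
    intro W
    induction W using Finset.induction_on with
    | empty => simp [hν.zero]
    | insert a s ha ih =>
      intro hW
      rw [Finset.sum_insert ha, Finset.sum_insert ha]
      have := hν.sub (b a • a) (∑ v ∈ s, b v • v)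
      have h2 := h1 a (hW (Finset.mem_insert_self _ _)) (b a)
      have h3 := ih (fun x hx => hW (Finset.mem_insert_of_mem hx))
      linarith
  exact this V subset_rfl

lemma NuData.peel (hν : NuData ν V) {C : ℝ}
    (hC : ∀ m, C < ν m → ∃ v ∈ V, ∃ m', m = m' + v ∧ ν m' + 1 ≤ ν m) (k : ℕ) :
    ∀ m, C + k < ν m → ∃ (b : (σ →₀ ℕ) → ℕ) (m' : σ →₀ ℕ), ∑ v ∈ V, b v = k ∧
      m = m' + ∑ v ∈ V, b v • v ∧ ν m' + k ≤ ν m := by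
  classical
  induction k with
  | zero => intro m _; exact ⟨0, m, by simp⟩
  | succ k ih =>
    intro m hm
    push_cast at hm
    obtain ⟨v, hv, m', rfl, h2⟩ := hC m (by linarith [(Nat.cast_nonneg k : (0:ℝ) ≤ k)])
    have h3 := hν.sub m' v
    rw [hν.vone v hv] at h3
    obtain ⟨b, m'', hb, hm', h4⟩ := ih m' (by linarith)
    refine ⟨fun w => b w + if w = v then 1 else 0, m'', ?_, ?_, ?_⟩
    · simp [Finset.sum_add_distrib, hb, hv]
    · simp only [add_smul, Finset.sum_add_distrib, ite_smul, one_smul, zero_smul]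
      rw [Finset.sum_ite_eq' V v, if_pos hv, ← add_assoc, ← hm']
    · push_cast; linarith

lemma NuData.peelN (hν : NuData ν V) (N : ℕ) : ∃ M : ℝ, ∀ m, M < ν m →
    ∃ v ∈ V, ∃ m', m = m' + N • v ∧ ν m' + N ≤ ν m := by
  classical
  obtain ⟨C, hC⟩ := hν.step
  refine ⟨C + ((V.card * N + 1 : ℕ) : ℝ), fun m hm => ?_⟩
  obtain ⟨b, m', hb, hm', h⟩ := hν.peel hC _ m hm
  have : ∃ v ∈ V, N ≤ b v := by
    by_contra hcon
    push Not at hcon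
    have := Finset.sum_le_card_nsmul V b N (fun v hv => (hcon v hv).le)
    rw [smul_eq_mul, show V.sum b = _ from hb] at this
    omega
  obtain ⟨v, hv, hN⟩ := this
  let b' : (σ →₀ ℕ) → ℕ := fun w => b w - if w = v then N else 0
  have hb' : ∀ w, b w = b' w + if w = v then N else 0 := by
    intro w
    by_cases hw : w = v
    · subst hw; simp [b']; omega
    · simp [b', hw]
  have e1 : ∑ w ∈ V, b w • w = ∑ w ∈ V, b' w • w + N • v := by
    simp_rw [fun w => hb' w, add_smul, Finset.sum_add_distrib, ite_smul, zero_smul]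
    rw [Finset.sum_ite_eq' V v, if_pos hv]
  have e2 : ∑ w ∈ V, b w = ∑ w ∈ V, b' w + N := by
    simp_rw [fun w => hb' w, Finset.sum_add_distrib]
    rw [Finset.sum_ite_eq' V v, if_pos hv]
  refine ⟨v, hv, m' + ∑ w ∈ V, b' w • w, ?_, ?_⟩
  · rw [hm', e1, add_assoc]
  · have h1 := hν.sub m' (∑ w ∈ V, b' w • w)
    have h2 := hν.sum_le b'
    rw [← hb, e2] at h
    push_cast at h
    linarith

lemma fin_all [Fintype τ] (hν : NuData ν V) {h : τ → MvPolynomial σ K} {N : ℕ}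
    (hN : FinV ν V h N) : ∃ M : ℝ, ∀ m, M < ν m →
      ∃ s : τ → MvPolynomial σ K, (∀ i, s i ∈ FN K ν (ν m - 1)) ∧
        monomial m (1 : K) - ∑ i, h i * s i ∈ FNlt K ν (ν m) := by
  obtain ⟨M, hM⟩ := hν.peelN N
  refine ⟨M, fun m hm => ?_⟩
  obtain ⟨v, hv, m', hmm, hle⟩ := hM m hm
  obtain ⟨s, hs, hs'⟩ := hN v hv
  have hm1 : monomial m' (1 : K) ∈ FN K ν (ν m') := monomial_mem_SN (show ν m' ≤ ν m' from le_rfl) 1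
  refine ⟨fun i => monomial m' 1 * s i, fun i => ?_, ?_⟩
  · exact FN_mono (by linarith) (mul_mem_FN hν hm1 (hs i))
  · have := mul_mem_FNlt hν hm1 hs'
    have e : monomial m (1 : K) - ∑ i, h i * (monomial m' 1 * s i)
        = monomial m' 1 * (monomial (N • v) (1 : K) - ∑ i, h i * s i) := by
      rw [mul_sub, monomial_mul, one_mul, ← hmm, Finset.mul_sum]
      congr 1
      exact Finset.sum_congr rfl fun i _ => by ring
    rw [e]
    exact SN_mono (fun x hx => lt_of_lt_of_le hx hle) this

lemma NuData.finite [Finite σ] (hν : NuData ν V) (α : ℝ) : {m | ν m ≤ α}.Finite := by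
  classical
  cases nonempty_fintype σ
  obtain ⟨L, hL, hb⟩ := hν.bound
  refine Set.Finite.subset (Set.finite_Iic (Finsupp.equivFunOnFinite.symm
    (fun _ : σ => ⌊L * α⌋₊))) ?_
  intro m hm
  rw [Set.mem_Iic]
  intro i
  simp only [Finsupp.equivFunOnFinite_symm_apply_apply]
  exact Nat.le_floor ((hb m i).trans (mul_le_mul_of_nonneg_left hm hL))

end basic
end TNProof

namespace TNProof

/-- real-valued total degree of an exponent -/
noncomputable def dg {τ : Type*} (d : τ →₀ ℕ) : ℝ := (d.degree : ℝ)

set_option linter.unusedSectionVars false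
section gen
variable {σ τ K : Type*} [Finite σ] [Fintype τ] [Field K] {ν : (σ →₀ ℕ) → ℝ} {V : Finset (σ →₀ ℕ)}

lemma dg_add (a b : τ →₀ ℕ) : dg (a + b) = dg a + dg b := by
  simp [dg]

lemma aeval_mem_FN (hν : NuData ν V) {h : τ → MvPolynomial σ K} (hh : ∀ i, h i ∈ FN K ν 1)
    {γ : ℝ} {p : MvPolynomial τ K} (hp : p ∈ FN K dg γ) : aeval h p ∈ FN K ν γ := by
  classical
  rw [aeval_def, eval₂_eq']
  refine Submodule.sum_mem _ fun d hd => ?_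
  rw [← Algebra.smul_def]
  refine Submodule.smul_mem _ _ (FN_mono (hp d hd) ?_)
  have : ∀ s : Finset τ, ∏ i ∈ s, h i ^ d i ∈ FN K ν (∑ i ∈ s, (d i : ℝ)) := by
    intro s
    induction s using Finset.induction_on with
    | empty => simpa using one_mem_FN hν
    | insert a s ha ih =>
      rw [Finset.prod_insert ha, Finset.sum_insert ha]
      refine mul_mem_FN hν ?_ ih
      simpa using pow_mem_FN hν (hh a) (d a)
  have h2 := this Finset.univ
  have e : dg d = ∑ i, (d i : ℝ) := by
    rw [dg, Finsupp.degree_eq_sum]; push_cast; rfl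
  rw [e]; exact h2

lemma gen (hν : NuData ν V) {h : τ → MvPolynomial σ K} {N : ℕ} (hN : FinV ν V h N) :
    ∃ T : Finset (σ →₀ ℕ), ∀ β : ℝ, ∀ b ∈ FN K ν β, ∃ p : (σ →₀ ℕ) → MvPolynomial τ K,
      (∀ m, p m ∈ FN K dg β) ∧ b = ∑ m ∈ T, aeval h (p m) * monomial m (1 : K) := by
  classical
  obtain ⟨M, hM⟩ := fin_all hν hN
  let T := (hν.finite M).toFinset
  let G : ℝ → Submodule K (MvPolynomial σ K) := fun β =>
    { carrier := {b | ∃ p : (σ →₀ ℕ) → MvPolynomial τ K,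
        (∀ m, p m ∈ FN K dg β) ∧ b = ∑ m ∈ T, aeval h (p m) * monomial m (1 : K)}
      zero_mem' := ⟨0, fun _ => Submodule.zero_mem _, by simp⟩
      add_mem' := by
        rintro a b ⟨s, hs, rfl⟩ ⟨t, ht, rfl⟩
        exact ⟨s + t, fun i => Submodule.add_mem _ (hs i) (ht i), by
          simp [add_mul, Finset.sum_add_distrib]⟩
      smul_mem' := by
        rintro c a ⟨s, hs, rfl⟩
        exact ⟨c • s, fun i => Submodule.smul_mem _ _ (hs i), by
          simp [Finset.smul_sum]⟩ }
  have Gmono : ∀ {β γ : ℝ}, β ≤ γ → G β ≤ G γ := by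
    rintro β γ hle b ⟨p, hp, rfl⟩
    exact ⟨p, fun m => FN_mono hle (hp m), rfl⟩
  have Gmul : ∀ {γ : ℝ} (i : τ) {b}, b ∈ G (γ - 1) → h i * b ∈ G γ := by
    rintro γ i b ⟨p, hp, rfl⟩
    refine ⟨fun m => X i * p m, fun m => ?_, ?_⟩
    · have h1 : (X i : MvPolynomial τ K) ∈ FN K dg 1 :=
        monomial_mem_SN (show dg (Finsupp.single i 1) ≤ 1 by simp [dg]) 1
      refine mul_mem_SN ?_ h1 (hp m)
      intro a ha b hb
      have ha' : dg a ≤ 1 := ha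
      have hb' : dg b ≤ γ - 1 := hb
      change dg (a + b) ≤ γ
      rw [dg_add]; linarith
    · rw [Finset.mul_sum]
      exact Finset.sum_congr rfl fun m _ => by simp [mul_assoc]
  have key : ∀ k : ℕ, ∀ m, {m' | ν m' < ν m}.ncard = k → monomial m (1 : K) ∈ G (ν m) := by
    intro k
    induction k using Nat.strong_induction_on with
    | _ k ih =>
      intro m hk
      have ih' : ∀ m', ν m' < ν m → monomial m' (1 : K) ∈ G (ν m') := by
        intro m' hm'
        refine ih _ ?_ m' rfl
        rw [← hk]
        refine Set.ncard_lt_ncard ?_ ((hν.finite (ν m)).subset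
          fun x (hx : ν x < ν m) => (le_of_lt hx : ν x ≤ ν m))
        refine ⟨fun x hx => lt_trans hx hm', fun hcon => ?_⟩
        exact (lt_irrefl (ν m') (show ν m' < ν m' from hcon hm'))
      by_cases hm : ν m ≤ M
      · have hmT : m ∈ T := by simpa [T] using hm
        refine ⟨fun m' => if m' = m then 1 else 0, fun m' => ?_, ?_⟩
        · dsimp only
          split_ifs
          · exact monomial_mem_SN (m := 0) (show dg 0 ≤ ν m by simpa [dg] using hν.nonneg m) 1
          · exact Submodule.zero_mem _
        · simp [apply_ite, ite_mul, hmT]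
      · obtain ⟨s, hs, hz⟩ := hM m (not_le.mp hm)
        have e : monomial m (1 : K) = ∑ i, h i * s i + (monomial m (1 : K) - ∑ i, h i * s i) := by
          ring
        rw [e]
        refine Submodule.add_mem _ (Submodule.sum_mem _ fun i _ => Gmul i ?_) ?_
        · refine SN_le ?_ (hs i)
          intro m' hm'
          have hm'' : ν m' ≤ ν m - 1 := hm'
          exact Gmono hm'' (ih' m' (by linarith))
        · refine SN_le ?_ hz
          intro m' hm'
          exact Gmono (le_of_lt hm') (ih' m' hm')
  refine ⟨T, fun β b hb => ?_⟩
  have : FN K ν β ≤ G β := SN_le fun m hm => Gmono hm (key _ m rfl)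
  exact this hb

lemma algInd (hν : NuData ν V) {h : τ → MvPolynomial σ K} {N : ℕ} (hN : FinV ν V h N)
    (hcard : Nat.card σ = Nat.card τ) : AlgebraicIndependent K h := by
  classical
  cases nonempty_fintype σ
  obtain ⟨T, hT⟩ := gen hν hN
  let A := Algebra.adjoin K (Set.range h)
  have hfin : Module.Finite A (MvPolynomial σ K) := by
    refine ⟨⟨T.image (fun m => monomial m (1 : K)), ?_⟩⟩
    rw [eq_top_iff]
    intro b _
    have : ∃ β, b ∈ FN K ν β := by
      refine ⟨∑ m ∈ b.support, ν m, fun m hm => ?_⟩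
      exact Finset.single_le_sum (f := ν) (fun i _ => hν.nonneg i) hm
    obtain ⟨β, hb⟩ := this
    obtain ⟨p, -, rfl⟩ := hT β b hb
    refine Submodule.sum_mem _ fun m hm => ?_
    have hmem : aeval h (p m) ∈ A := by
      have : A = (aeval h : MvPolynomial τ K →ₐ[K] _).range := Algebra.adjoin_range_eq_range_aeval K h
      rw [this]; exact ⟨p m, rfl⟩
    have : aeval h (p m) * monomial m (1 : K) = (⟨aeval h (p m), hmem⟩ : A) • monomial m (1 : K) := rfl
    rw [this]
    refine Submodule.smul_mem _ _ (Submodule.subset_span ?_)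
    simp only [Finset.coe_image]
    exact ⟨m, hm, rfl⟩
  have : Algebra.IsIntegral A (MvPolynomial σ K) := Algebra.IsIntegral.of_finite _ _
  have : Algebra.IsAlgebraic A (MvPolynomial σ K) := Algebra.IsIntegral.isAlgebraic
  obtain ⟨t, hts, htb⟩ := exists_isTranscendenceBasis_subset (R := K) (Set.range h)
  have hX : IsTranscendenceBasis K (X : σ → MvPolynomial σ K) := IsTranscendenceBasis.mvPolynomial σ K
  have hc := htb.lift_cardinalMk_eq hX
  have htfin : t.Finite := (Set.finite_range h).subset hts
  have : t.ncard = Nat.card σ := by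
    have := congrArg Cardinal.toNat hc
    rw [← Nat.card_coe_set_eq]
    simp only [Cardinal.toNat_lift] at this
    exact this
  have hr : t.ncard = Nat.card τ := this.trans hcard
  have hle : (Set.range h).ncard ≤ Nat.card τ := by
    rw [← Set.image_univ, ← Set.ncard_univ]; exact Set.ncard_image_le Set.finite_univ
  have hEq : t = Set.range h := Set.eq_of_subset_of_ncard_le hts (by omega) (Set.finite_range h)
  have hinj : Function.Injective h := by
    have h1 : (h '' Set.univ).ncard = (Set.univ : Set τ).ncard := by
      rw [Set.image_univ, ← hEq, hr, Set.ncard_univ]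
    exact Set.injOn_univ.mp ((Set.ncard_image_iff Set.finite_univ).mp h1)
  subst hEq
  have := htb.1
  exact (algebraicIndependent_subtype_range hinj).mp this

end gen
end TNProof

namespace TNProof
set_option linter.unusedSectionVars false
section charp
variable {σ τ K : Type*} [Finite σ] [Fintype τ] [Field K] {ν : (σ →₀ ℕ) → ℝ} {V : Finset (σ →₀ ℕ)}

lemma exists_common_bound {ι : Type*} (s : Finset ι) (p : ι → MvPolynomial τ K) :
    ∃ C : ℝ, 0 ≤ C ∧ ∀ i ∈ s, p i ∈ FN K dg C := by
  refine ⟨∑ i ∈ s, ∑ d ∈ (p i).support, dg d, ?_, fun i hi d hd => ?_⟩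
  · exact Finset.sum_nonneg fun i _ => Finset.sum_nonneg fun d _ => Nat.cast_nonneg _
  · refine (Finset.single_le_sum (f := dg) (fun d _ => Nat.cast_nonneg _) hd).trans ?_
    exact Finset.single_le_sum (f := fun i => ∑ d ∈ (p i).support, dg d)
      (fun i _ => Finset.sum_nonneg fun d _ => Nat.cast_nonneg _) hi

lemma mul_mem_dg {α β : ℝ} {x y : MvPolynomial τ K} (hx : x ∈ FN K dg α) (hy : y ∈ FN K dg β) :
    x * y ∈ FN K dg (α + β) := by
  refine mul_mem_SN (fun a ha b hb => ?_) hx hy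
  change dg (a + b) ≤ _
  rw [dg_add]; exact add_le_add ha hb

/-- a free submodule of full rank, with degree control -/
lemma free_sub (hν : NuData ν V) {h : τ → MvPolynomial σ K} {N : ℕ} (hN : FinV ν V h N)
    (hcard : Nat.card σ = Nat.card τ) :
    ∃ (S : Finset (σ →₀ ℕ)) (c : MvPolynomial τ K) (C : ℝ), c ≠ 0 ∧
      (∀ p : (σ →₀ ℕ) → MvPolynomial τ K,
        ∑ k ∈ S, aeval h (p k) * monomial k (1 : K) = 0 → ∀ k ∈ S, p k = 0) ∧
      (∀ β : ℝ, ∀ b ∈ FN K ν β, ∃ p : (σ →₀ ℕ) → MvPolynomial τ K,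
        (∀ k, p k ∈ FN K dg (β + C)) ∧
          aeval h c * b = ∑ k ∈ S, aeval h (p k) * monomial k (1 : K)) := by
  classical
  obtain ⟨T, hT⟩ := gen hν hN
  let _ : Algebra (MvPolynomial τ K) (MvPolynomial σ K) := (aeval h).toRingHom.toAlgebra
  have smul_eq : ∀ (p : MvPolynomial τ K) (b : MvPolynomial σ K), p • b = aeval h p * b :=
    fun p b => rfl
  obtain ⟨S0, hS0, hmax⟩ := exists_maximal_linearIndepOn (MvPolynomial τ K)
    (fun m : T => (monomial (m : σ →₀ ℕ) (1 : K) : MvPolynomial σ K))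
  let S : Finset (σ →₀ ℕ) := (S0.toFinset).image Subtype.val
  have hSmem : ∀ k, k ∈ S ↔ ∃ hk : k ∈ T, (⟨k, hk⟩ : T) ∈ S0 := by
    intro k; simp [S]
  have hind : ∀ p : (σ →₀ ℕ) → MvPolynomial τ K,
        ∑ k ∈ S, aeval h (p k) * monomial k (1 : K) = 0 → ∀ k ∈ S, p k = 0 := by
    intro p hp k hk
    obtain ⟨hkT, hk0⟩ := (hSmem k).mp hk
    have h1 := (linearIndepOn_finset_iff (s := S0.toFinset)).mp (by simpa using hS0)
      (fun m => p m) ?_ ⟨k, hkT⟩ (by simpa using hk0)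
    · exact h1
    · rw [← hp, Finset.sum_image (by intro a _ b _ hab; exact Subtype.ext hab)]
      exact Finset.sum_congr rfl fun m _ => smul_eq _ _
  have hspan : ∀ m : T, ∃ a : MvPolynomial τ K, a ≠ 0 ∧ ∃ p : (σ →₀ ℕ) → MvPolynomial τ K,
      aeval h a * monomial (m : σ →₀ ℕ) (1 : K) = ∑ k ∈ S, aeval h (p k) * monomial k (1 : K) := by
    intro m
    by_cases hm : m ∈ S0
    · refine ⟨1, one_ne_zero, fun k => if k = m then 1 else 0, ?_⟩
      have : (m : σ →₀ ℕ) ∈ S := (hSmem _).mpr ⟨m.2, hm⟩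
      simp [apply_ite, ite_mul, this]
    · obtain ⟨a, ha, hmem⟩ := hmax m hm
      refine ⟨a, ha, ?_⟩
      have e : ((fun m : T => (monomial (m : σ →₀ ℕ) (1 : K) : MvPolynomial σ K)) '' S0)
          = ((S.image fun k => (monomial k (1 : K) : MvPolynomial σ K)) : Finset _) := by
        ext x; simp [S]
      rw [e, smul_eq] at hmem
      have h2 := Submodule.mem_span_image_finset_iff_exists_fun (R := MvPolynomial τ K) 
        (v := fun k => (monomial k (1 : K) : MvPolynomial σ K)) (s := S)
        (x := aeval h a * monomial (m : σ →₀ ℕ) (1 : K))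
      rw [Finset.coe_image] at hmem
      obtain ⟨p, hp⟩ := h2.mp hmem
      refine ⟨fun k => if hk : k ∈ S then p ⟨k, hk⟩ else 0, ?_⟩
      rw [← hp, ← Finset.sum_coe_sort S]
      refine Finset.sum_congr rfl fun k _ => ?_
      dsimp only; rw [dif_pos k.2]; exact smul_eq _ _
  choose a ha p hp using hspan
  let c : MvPolynomial τ K := ∏ m : T, a m
  let c' : T → MvPolynomial τ K := fun m => ∏ m' ∈ Finset.univ.erase m, a m'
  have hcc : ∀ m, c = c' m * a m := fun m => (Finset.prod_erase_mul _ _ (Finset.mem_univ m)).symm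
  obtain ⟨C, hC0, hC⟩ := exists_common_bound (Finset.univ ×ˢ S)
    (fun x : T × (σ →₀ ℕ) => c' x.1 * p x.1 x.2)
  refine ⟨S, c, C, Finset.prod_ne_zero_iff.mpr fun m _ => ha m, hind, fun β b hb => ?_⟩
  obtain ⟨r, hr, rfl⟩ := hT β b hb
  refine ⟨fun k => if k ∈ S then ∑ m : T, r m * (c' m * p m k) else 0, fun k => ?_, ?_⟩
  · dsimp only
    split_ifs with hk
    · refine Submodule.sum_mem _ fun m _ => mul_mem_dg (hr m) (hC (m, k) (by simp [hk]))
    · exact Submodule.zero_mem _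
  · rw [← Finset.sum_coe_sort T, Finset.mul_sum]
    have : ∀ m : T, aeval h c * (aeval h (r m) * monomial (m : σ →₀ ℕ) (1 : K))
        = ∑ k ∈ S, aeval h (r m * (c' m * p m k)) * monomial k (1 : K) := by
      intro m
      have : aeval h c * (aeval h (r m) * monomial (m : σ →₀ ℕ) (1 : K))
        = aeval h (r m) * aeval h (c' m) * (aeval h (a m) * monomial (m : σ →₀ ℕ) (1 : K)) := by
        rw [hcc m, map_mul]; ring
      rw [this, hp m, Finset.mul_sum]
      refine Finset.sum_congr rfl fun k _ => ?_
      simp only [map_mul]; ring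
    simp_rw [this]
    rw [Finset.sum_comm]
    refine Finset.sum_congr rfl fun k hk => ?_
    rw [if_pos hk, map_sum, Finset.sum_mul]

/-- monomial ideals -/
lemma monomial_ideal {J : Finset τ} {q : ℕ} {d : ℝ} {p : MvPolynomial τ K} (hp : p ∈ FN K dg d)
    {p' : τ → MvPolynomial τ K} (e : τ →₀ ℕ) (he : ∀ i ∈ J, e i = 0)
    (heq : monomial e (1 : K) * p = ∑ i ∈ J, X i ^ q * p' i) :
    p ∈ WW dg (fun i => (X i : MvPolynomial τ K) ^ q) J (d - q) := by
  classical
  rw [p.as_sum]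
  refine Submodule.sum_mem _ fun m hm => ?_
  have h1 : coeff (e + m) (monomial e (1 : K) * p) ≠ 0 := by
    rw [coeff_monomial_mul, one_mul]; exact mem_support_iff.mp hm
  rw [heq, coeff_sum] at h1
  obtain ⟨i, hi, h2⟩ := Finset.exists_ne_zero_of_sum_ne_zero h1
  have hq : q ≤ m i := by
    rw [X_pow_eq_monomial, coeff_monomial_mul'] at h2
    by_contra hcon
    apply h2
    rw [if_neg]
    intro hle
    have := hle i
    simp [he i hi] at this
    omega
  have hm' : m = Finsupp.single i q + (m - Finsupp.single i q) := by
    ext k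
    by_cases hk : k = i
    · subst hk; simp; omega
    · simp [Ne.symm hk]
  have : monomial m (coeff m p) = X i ^ q * monomial (m - Finsupp.single i q) (coeff m p) := by
    rw [X_pow_eq_monomial, monomial_mul, one_mul, ← hm']
  rw [this]
  refine mul_mem_WW (h := fun i => (X i : MvPolynomial τ K) ^ q) hi (monomial_mem_SN ?_ _)
  change dg _ ≤ _
  have h3 := hp m hm
  have h4 : dg m ≤ d := h3
  rw [hm', dg_add] at h4
  have h5 : dg (Finsupp.single i q) = q := by simp [dg]
  linarith

end charp
end TNProof

namespace TNProof
set_option linter.unusedSectionVars false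
section charp
variable {σ τ K : Type*} [Finite σ] [Fintype τ] [Field K] {ν : (σ →₀ ℕ) → ℝ} {V : Finset (σ →₀ ℕ)}

/-- the Cartier-type operator -/
lemma exists_Phi (p : ℕ) [Fact p.Prime] [CharP K p] [PerfectRing K p] (e : ℕ) (a : σ →₀ ℕ)
    (ha : ∀ i, a i < p ^ e) :
    ∃ Φ : MvPolynomial σ K → MvPolynomial σ K,
      (∀ g m, coeff m (Φ g) = (iterateFrobeniusEquiv K p e).symm (coeff (p ^ e • m + a) g)) ∧
      (∀ x y, Φ (x + y) = Φ x + Φ y) ∧ (∀ s g, Φ (s * g ^ p ^ e) = Φ s * g) := by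
  classical
  have hq : 0 < p ^ e := pow_pos (Nat.Prime.pos Fact.out) e
  have hinj : Function.Injective (fun m : σ →₀ ℕ => p ^ e • m + a) := by
    intro m m' hm
    have : p ^ e • m = p ^ e • m' := add_right_cancel hm
    ext i
    have := DFunLike.congr_fun this i
    simp only [Finsupp.smul_apply, smul_eq_mul] at this
    exact Nat.eq_of_mul_eq_mul_left hq this
  let Φ : MvPolynomial σ K → MvPolynomial σ K := fun g =>
    ∑ m ∈ g.support.preimage (fun m : σ →₀ ℕ => p ^ e • m + a) hinj.injOn,
      monomial m ((iterateFrobeniusEquiv K p e).symm (coeff (p ^ e • m + a) g))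
  have hΦ : ∀ g m, coeff m (Φ g) =
      (iterateFrobeniusEquiv K p e).symm (coeff (p ^ e • m + a) g) := by
    intro g m
    simp only [Φ, coeff_sum, coeff_monomial]
    rw [Finset.sum_ite_eq']
    split_ifs with h
    · rfl
    · have : coeff (p ^ e • m + a) g = 0 := by simpa using h
      rw [this, map_zero]
  have hadd : ∀ x y, Φ (x + y) = Φ x + Φ y := by
    intro x y; ext m; simp [hΦ]
  refine ⟨Φ, hΦ, hadd, ?_⟩
  have hmono : ∀ s b κ, Φ (s * (monomial b κ) ^ p ^ e) = Φ s * monomial b κ := by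
    intro s b κ
    ext m
    rw [hΦ, monomial_pow, coeff_mul_monomial', coeff_mul_monomial']
    have hiff : p ^ e • b ≤ p ^ e • m + a ↔ b ≤ m := by
      constructor
      · intro h i
        have h1 := h i
        have h2 := ha i
        simp only [Finsupp.smul_apply, Finsupp.add_apply, smul_eq_mul] at h1
        by_contra hcon
        have h3 : m i + 1 ≤ b i := by omega
        have h4 := Nat.mul_le_mul_left (p ^ e) h3
        rw [mul_add] at h4
        omega
      · intro h i
        have h1 := Nat.mul_le_mul_left (p ^ e) (h i)
        simp only [Finsupp.smul_apply, Finsupp.add_apply, smul_eq_mul]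
        omega
    by_cases hb : b ≤ m
    · rw [if_pos (hiff.mpr hb), if_pos hb, map_mul, hΦ]
      congr 1
      · congr 2
        ext i
        have h1 := Nat.mul_le_mul_left (p ^ e) (hb i)
        simp [Nat.mul_sub]
        omega
      · rw [RingEquiv.symm_apply_eq, iterateFrobeniusEquiv_def]
    · rw [if_neg (fun h => hb (hiff.mp h)), if_neg hb, map_zero]
  intro s g
  induction g using MvPolynomial.induction_on' with
  | monomial u a => exact hmono s u a
  | add p1 p2 ih1 ih2 =>
    rw [add_pow_char_pow, mul_add, hadd, ih1, mul_add, ih2]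

theorem regular_charp (p : ℕ) [Fact p.Prime] [CharP K p] [PerfectRing K p]
    (hν : NuData ν V) {h : τ → MvPolynomial σ K} (hh : ∀ i, h i ∈ FN K ν 1) {N : ℕ}
    (hN : FinV ν V h N) (hcard : Nat.card σ = Nat.card τ) [DecidableEq τ]
    (J : Finset τ) (α : ℝ) (r : MvPolynomial σ K) (hr : r ∈ FN K ν α)
    (s : τ → MvPolynomial σ K) (hs : (∏ j ∈ Jᶜ, h j) * r = ∑ i ∈ J, h i * s i) :
    r ∈ WW ν h J (α - 1) := by
  classical
  obtain ⟨S, c, C, hc0, hind, hgen⟩ := free_sub hν hN hcard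
  let E : ℝ := ∑ k ∈ S, ν k
  have hE : ∀ k ∈ S, ν k ≤ E := fun k hk =>
    Finset.single_le_sum (f := ν) (fun i _ => hν.nonneg i) hk
  have hp0 : 0 < p := Nat.Prime.pos Fact.out
  -- step 1
  have step1 : ∀ e : ℕ, aeval h c * r ^ p ^ e ∈
      WW ν (fun i => h i ^ p ^ e) J ((p ^ e : ℕ) * (α - 1) + (C + E)) := by
    intro e
    set q := p ^ e with hq
    have hrq := pow_mem_FN hν hr q
    obtain ⟨P, hP, hPe⟩ := hgen _ _ hrq
    have hsq : ∀ i, ∃ P' : (σ →₀ ℕ) → MvPolynomial τ K,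
        aeval h c * (s i) ^ q = ∑ k ∈ S, aeval h (P' k) * monomial k (1 : K) := by
      intro i
      have : (s i) ^ q ∈ FN K ν (∑ m ∈ (s i ^ q).support, ν m) := fun m hm =>
        Finset.single_le_sum (f := ν) (fun i _ => hν.nonneg i) hm
      obtain ⟨P', -, h2⟩ := hgen _ _ this
      exact ⟨P', h2⟩
    choose P' hP' using hsq
    let ee : τ →₀ ℕ := ∑ j ∈ Jᶜ, Finsupp.single j q
    have hee : ∀ i ∈ J, ee i = 0 := by
      intro i hi
      simp only [ee, Finsupp.finsetSum_apply]
      refine Finset.sum_eq_zero fun j hj => ?_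
      rw [Finset.mem_compl] at hj
      rw [Finsupp.single_apply, if_neg]
      rintro rfl; exact hj hi
    have hee2 : (monomial ee (1 : K) : MvPolynomial τ K) = ∏ j ∈ Jᶜ, X j ^ q := by
      rw [monomial_sum_one]
      exact Finset.prod_congr rfl fun j _ => (X_pow_eq_monomial).symm
    have hpow : (∏ j ∈ Jᶜ, h j ^ q) * r ^ q = ∑ i ∈ J, h i ^ q * s i ^ q := by
      rw [Finset.prod_pow, ← mul_pow, hs, hq, sum_pow_char_pow]
      exact Finset.sum_congr rfl fun i _ => mul_pow _ _ _
    have hz : ∑ k ∈ S, aeval h (monomial ee (1 : K) * P k - ∑ i ∈ J, X i ^ q * P' i k) *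
        monomial k (1 : K) = 0 := by
      have e1 : ∑ k ∈ S, aeval h (monomial ee (1 : K) * P k) * monomial k (1 : K)
          = aeval h c * ((∏ j ∈ Jᶜ, h j ^ q) * r ^ q) := by
        rw [mul_left_comm, hPe, Finset.mul_sum]
        refine Finset.sum_congr rfl fun k _ => ?_
        rw [hee2]; simp [mul_assoc]
      have e2 : ∑ k ∈ S, aeval h (∑ i ∈ J, X i ^ q * P' i k) * monomial k (1 : K)
          = aeval h c * ∑ i ∈ J, h i ^ q * s i ^ q := by
        rw [Finset.mul_sum]
        simp_rw [mul_left_comm (aeval h c), hP', Finset.mul_sum]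
        rw [Finset.sum_comm]
        refine Finset.sum_congr rfl fun k _ => ?_
        simp [Finset.sum_mul, mul_assoc]
      simp_rw [map_sub, sub_mul, Finset.sum_sub_distrib]
      rw [e1, e2, hpow, sub_self]
    have hk := hind _ hz
    rw [hPe]
    refine Submodule.sum_mem _ fun k hkS => ?_
    have h1 := monomial_ideal (hP k) ee hee (sub_eq_zero.mp (hk k hkS))
    obtain ⟨t, ht, hte⟩ := h1
    rw [hte, map_sum, Finset.sum_mul]
    refine Submodule.sum_mem _ fun i hi => ?_
    rw [map_mul, map_pow, aeval_X, mul_assoc]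
    refine mul_mem_WW (h := fun i => h i ^ q) hi ?_
    have h2 := aeval_mem_FN hν hh (ht i)
    have h3 : monomial k (1 : K) ∈ FN K ν E := monomial_mem_SN (hE k hkS) 1
    have h4 := mul_mem_FN hν h2 h3
    refine FN_mono (le_of_eq ?_) h4
    ring
  -- step 2
  have hc' : aeval h c ≠ 0 := by
    intro h0
    exact hc0 ((map_eq_zero_iff _ (algInd hν hN hcard)).mp h0)
  obtain ⟨a, ha⟩ := MvPolynomial.support_nonempty.mpr hc'
  obtain ⟨L, hL0, hL⟩ := hν.bound
  let D : ℝ := C + E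
  -- uniform choice of q
  have huni : ∃ k0 : ℕ, ∀ q : ℕ, k0 ≤ q → ∀ m, ν (q • m + a) ≤ q * (α - 1) + D → ν m ≤ α - 1 := by
    let R : ℕ := ⌊L * (|α - 1| + |D|)⌋₊
    let F : Set (σ →₀ ℕ) := {m | ∀ i, m i ≤ R}
    have hF : F.Finite := by
      refine (Set.finite_Iic (Finsupp.equivFunOnFinite.symm (fun _ : σ => R))).subset ?_
      intro m hm i
      simpa using hm i
    have hbad : ∀ m, ∃ k : ℕ, ν m ≤ α - 1 ∨ ∀ q : ℕ, k ≤ q → ¬ ν (q • m + a) ≤ q * (α - 1) + D := by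
      intro m
      by_contra hcon
      push Not at hcon
      exact absurd (hν.lim m a (α - 1) D fun k => (hcon k).2) (not_le.mpr (hcon 0).1)
    choose kk hkk using hbad
    refine ⟨1 + ∑ m ∈ hF.toFinset, kk m, fun q hq m hm => ?_⟩
    have hq1 : (1 : ℝ) ≤ q := by exact_mod_cast (by omega : 1 ≤ q)
    have hmF : m ∈ hF.toFinset := by
      rw [Set.Finite.mem_toFinset]
      intro i
      refine Nat.le_floor ?_
      have h1 := hL (q • m + a) i
      simp only [Finsupp.add_apply, Finsupp.smul_apply, smul_eq_mul] at h1
      push_cast at h1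
      have h2 : (q : ℝ) * m i ≤ L * (q * (|α - 1| + |D|)) := by
        have h3 : ν (q • m + a) ≤ q * (|α - 1| + |D|) := by
          have := le_abs_self (α - 1)
          have h5 := le_abs_self D
          have h6 := abs_nonneg D
          nlinarith
        have h4 := mul_le_mul_of_nonneg_left h3 hL0
        have h7 : (0 : ℝ) ≤ a i := Nat.cast_nonneg _
        linarith
      have h3 : (q : ℝ) * m i ≤ q * (L * (|α - 1| + |D|)) := by linarith
      exact le_of_mul_le_mul_left h3 (by linarith)
    rcases hkk m with h1 | h1
    · exact h1
    · refine absurd hm (h1 q ?_)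
      have := Finset.single_le_sum (f := kk) (fun i _ => Nat.zero_le _) hmF
      omega
  obtain ⟨k0, hk0⟩ := huni
  let k1 : ℕ := ∑ m ∈ (aeval h c).support, m.degree
  have hk1 : ∀ m ∈ (aeval h c).support, ∀ i, m i ≤ k1 := fun m hm i =>
    (Finsupp.le_degree i m).trans
      (Finset.single_le_sum (f := fun m : σ →₀ ℕ => m.degree) (fun i _ => Nat.zero_le _) hm)
  let e : ℕ := k0 + k1 + 1
  have he : e < p ^ e := Nat.lt_pow_self (Nat.Prime.one_lt Fact.out)
  obtain ⟨Φ, hΦ, hadd, hmul⟩ := exists_Phi (K := K) p e a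
    (fun i => lt_of_le_of_lt (hk1 a ha i) (by omega))
  have hΦ0 : Φ 0 = 0 := by ext m; simp [hΦ]
  have hΦsum : ∀ (I : Finset τ) (g : τ → MvPolynomial σ K), Φ (∑ i ∈ I, g i) = ∑ i ∈ I, Φ (g i) := by
    intro I g
    exact map_sum (AddMonoidHom.mk' Φ hadd) g I
  obtain ⟨t, ht, hte⟩ := step1 e
  have h1 := congrArg Φ hte
  rw [hmul, hΦsum] at h1
  have hΦc : Φ (aeval h c) = MvPolynomial.C ((iterateFrobeniusEquiv K p e).symm (coeff a (aeval h c))) := by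
    ext m
    rw [hΦ, coeff_C]
    by_cases hm : m = 0
    · subst hm; simp
    · rw [if_neg (Ne.symm hm)]
      have : coeff (p ^ e • m + a) (aeval h c) = 0 := by
        by_contra hne
        obtain ⟨i, hi⟩ := Finsupp.ne_iff.mp hm
        have h2 := hk1 _ (mem_support_iff.mpr hne) i
        simp only [Finsupp.add_apply, Finsupp.smul_apply, smul_eq_mul] at h2
        have h3 : 1 ≤ m i := Nat.one_le_iff_ne_zero.mpr hi
        have h4 := Nat.mul_le_mul_left (p ^ e) h3
        omega
      rw [this, map_zero]
  set κ := (iterateFrobeniusEquiv K p e).symm (coeff a (aeval h c)) with hκ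
  have hκ0 : κ ≠ 0 := by
    rw [hκ]; exact (map_ne_zero_iff _ (RingEquiv.injective _)).mpr (mem_support_iff.mp ha)
  rw [hΦc] at h1
  have h2 : κ • r ∈ WW ν h J (α - 1) := by
    rw [MvPolynomial.smul_eq_C_mul, h1]
    refine Submodule.sum_mem _ fun i hi => ?_
    rw [mul_comm, hmul, mul_comm]
    refine mul_mem_WW hi fun m hm => ?_
    have h3 : coeff (p ^ e • m + a) (t i) ≠ 0 := by
      intro h0
      rw [mem_support_iff, hΦ, h0, map_zero] at hm
      exact hm rfl
    refine hk0 (p ^ e) (by omega) m ?_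
    exact ht i _ (mem_support_iff.mpr h3)
  have := Submodule.smul_mem _ κ⁻¹ h2
  rwa [smul_smul, inv_mul_cancel₀ hκ0, one_smul] at this

end charp
end TNProof

namespace TNProof

lemma int_jacobson : IsJacobsonRing ℤ := by
  rw [isJacobsonRing_iff_prime_eq]
  intro P hP
  by_cases h0 : P = ⊥
  · subst h0
    rw [eq_bot_iff]
    intro x hx
    have h1 := Ideal.mem_jacobson_bot.mp hx 3
    rw [Ideal.mem_bot]
    rcases Int.isUnit_iff.mp h1 with h | h <;> omega
  · have := hP.isMaximal h0
    exact Ideal.jacobson_eq_self_of_isMaximal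

lemma exists_red (C : Finset ℂ) : ∃ (D : Subring ℂ) (p : ℕ) (_ : Fact p.Prime) (K : Type)
    (_ : Field K) (_ : CharP K p) (_ : PerfectRing K p) (_ : D →+* K), (C : Set ℂ) ⊆ D := by
  let D : Subalgebra ℤ ℂ := Algebra.adjoin ℤ (C : Set ℂ)
  have hft : Algebra.FiniteType ℤ D := (Subalgebra.fg_iff_finiteType D).mp ⟨C, rfl⟩
  obtain ⟨m, hm⟩ := Ideal.exists_maximal D
  let _ : Field (D ⧸ m) := Ideal.Quotient.field m
  have hft2 : Algebra.FiniteType ℤ (D ⧸ m) :=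
    Algebra.FiniteType.of_surjective (Ideal.Quotient.mkₐ ℤ m) (Ideal.Quotient.mkₐ_surjective ℤ m)
  have := int_jacobson
  have hfin : Module.Finite ℤ (D ⧸ m) := finite_of_finite_type_of_isJacobsonRing ℤ (D ⧸ m)
  obtain ⟨p, hp⟩ := CharP.exists (D ⧸ m)
  have hp0 : p ≠ 0 := by
    rintro rfl
    have : CharZero (D ⧸ m) := CharP.charP_to_charZero _
    have h_integral : Algebra.IsIntegral ℤ (D ⧸ m) := Algebra.IsIntegral.of_finite _ _
    have hinj : Function.Injective (algebraMap ℤ (D ⧸ m)) := by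
      rw [eq_intCast (algebraMap ℤ (D ⧸ m)) |> funext]
      exact Int.cast_injective
    exact Int.not_isField (isField_of_isIntegral_of_isField hinj (Field.toIsField (D ⧸ m)))
  have hpp : Fact p.Prime := ⟨(CharP.char_is_prime_or_zero (D ⧸ m) p).resolve_right hp0⟩
  have hc : CharP (AlgebraicClosure (D ⧸ m)) p := charP_of_injective_algebraMap
    (algebraMap (D ⧸ m) (AlgebraicClosure (D ⧸ m))).injective p
  refine ⟨D.toSubring, p, hpp, AlgebraicClosure (D ⧸ m), inferInstance, hc, inferInstance,
    (algebraMap (D ⧸ m) (AlgebraicClosure (D ⧸ m))).comp (Ideal.Quotient.mk m), ?_⟩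
  intro x hx
  exact Algebra.subset_adjoin hx

/-- the linear functional with prescribed values on monomials -/
noncomputable def Lam {σ : Type*} (R : Type*) [CommRing R] (t : (σ →₀ ℕ) → R) :
    MvPolynomial σ R →ₗ[R] R := (basisMonomials σ R).constr R t

lemma Lam_monomial {σ R : Type*} [CommRing R] (t : (σ →₀ ℕ) → R) (m : σ →₀ ℕ) (c : R) :
    Lam R t (monomial m c) = c * t m := by
  have : monomial m c = c • basisMonomials σ R m := by
    simp [smul_monomial]
  rw [this, map_smul, Lam, Module.Basis.constr_basis, smul_eq_mul]

lemma Lam_map {σ R S : Type*} [CommRing R] [CommRing S] (φ : R →+* S) (t : (σ →₀ ℕ) → R)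
    (g : MvPolynomial σ R) : Lam S (fun m => φ (t m)) (map φ g) = φ (Lam R t g) := by
  induction g using MvPolynomial.induction_on' with
  | monomial u a => rw [map_monomial, Lam_monomial, Lam_monomial, map_mul]
  | add p q hp hq => simp [hp, hq]

theorem regular_char0 {σ τ : Type*} [Finite σ] [Fintype τ] [DecidableEq τ]
    {ν : (σ →₀ ℕ) → ℝ} {V : Finset (σ →₀ ℕ)}
    (hν : NuData ν V) {h : τ → MvPolynomial σ ℂ} (hh : ∀ i, h i ∈ FN ℂ ν 1) {N : ℕ}
    (hN : FinV ν V h N) (hcard : Nat.card σ = Nat.card τ)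
    (J : Finset τ) (α : ℝ) (r : MvPolynomial σ ℂ) (hr : r ∈ FN ℂ ν α)
    (s : τ → MvPolynomial σ ℂ) (hs : (∏ j ∈ Jᶜ, h j) * r = ∑ i ∈ J, h i * s i) :
    r ∈ WW ν h J (α - 1) := by
  classical
  by_contra hnot
  obtain ⟨l0, hl0, hl0'⟩ := Submodule.exists_le_ker_of_notMem hnot
  obtain ⟨l, hl, hl'⟩ : ∃ l : MvPolynomial σ ℂ →ₗ[ℂ] ℂ, l r = 1 ∧
      ∀ x ∈ WW ν h J (α - 1), l x = 0 :=
    ⟨(l0 r)⁻¹ • l0, by simp [inv_mul_cancel₀ hl0], fun x hx => by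
      have : l0 x = 0 := hl0' hx
      simp [this]⟩
  choose! w hw1 hw2 using hN
  let Fp : Finset (MvPolynomial σ ℂ) := {r} ∪ Finset.univ.image h ∪ Finset.univ.image s ∪
    (V ×ˢ Finset.univ).image (fun x => w x.1 x.2)
  let C : Finset ℂ := (Fp.biUnion fun g => g.support.image fun m => coeff m g) ∪
    (hν.finite α).toFinset.image fun m => l (monomial m 1)
  obtain ⟨D, p, _, K, _, _, _, φ, hC⟩ := exists_red C
  let ι : D →+* ℂ := D.subtype
  have hι : Function.Injective ι := Subtype.val_injective
  have lift : ∀ g ∈ Fp, ∃ g' : MvPolynomial σ D, map ι g' = g := by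
    intro g hg
    have : g ∈ Set.range (map ι : MvPolynomial σ D →+* _) := by
      rw [mem_range_map_iff_coeffs_subset]
      intro x hx
      obtain ⟨m, hm, rfl⟩ := mem_coeffs_iff.mp hx
      refine ⟨⟨coeff m g, hC ?_⟩, rfl⟩
      simp only [C, Finset.coe_union, Set.mem_union, Finset.mem_coe, Finset.mem_biUnion,
        Finset.mem_image]
      exact Or.inl ⟨g, hg, m, hm, rfl⟩
    exact this
  have supp : ∀ g' : MvPolynomial σ D, (map ι g').support = g'.support :=
    fun g' => support_map_of_injective g' hι
  have transf : ∀ (S : Set (σ →₀ ℕ)) (g' : MvPolynomial σ D), map ι g' ∈ SN ℂ S →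
      map φ g' ∈ SN K S := by
    intro S g' hg m hm
    exact hg m (by rw [supp]; exact support_map_subset _ _ hm)
  obtain ⟨r', rfl⟩ := lift r (by simp [Fp])
  have h1 : ∀ i, ∃ g' : MvPolynomial σ D, map ι g' = h i := fun i => lift _ (by simp [Fp])
  have h2 : ∀ i, ∃ g' : MvPolynomial σ D, map ι g' = s i := fun i => lift _ (by simp [Fp])
  have h3 : ∀ v ∈ V, ∀ i, ∃ g' : MvPolynomial σ D, map ι g' = w v i := fun v hv i => lift _ (by
    simp only [Fp, Finset.mem_union, Finset.mem_image]
    exact Or.inr ⟨(v, i), by simp [hv], rfl⟩)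
  choose h' hh' using h1
  choose s' hs' using h2
  choose! w' hw' using h3
  have hinj : Function.Injective (map ι : MvPolynomial σ D →+* _) := map_injective _ hι
  have hsD : (∏ j ∈ Jᶜ, h' j) * r' = ∑ i ∈ J, h' i * s' i := by
    apply hinj
    simp only [map_mul, map_prod, map_sum, hh', hs', hs]
  have key := regular_charp (σ := σ) (τ := τ) (K := K) p hν (h := fun i => map φ (h' i)) (N := N)
    (fun i => transf _ _ (by rw [hh']; exact hh i)) ?_ hcard J α (map φ r') (transf _ _ hr)
    (fun i => map φ (s' i)) ?_
  · let t : (σ →₀ ℕ) → D := fun m => if hm : ν m ≤ α then ⟨l (monomial m 1), hC (by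
      simp only [C, Finset.coe_union, Set.mem_union, Finset.mem_coe, Finset.mem_image]
      exact Or.inr ⟨m, by simpa using hm, rfl⟩)⟩ else 0
    have hLC : ∀ g ∈ FN ℂ ν α, Lam ℂ (fun m => ι (t m)) g = l g := by
      intro g hg
      have : FN ℂ ν α ≤ LinearMap.eqLocus (Lam ℂ (fun m => ι (t m))) l := by
        refine SN_le fun m hm => ?_
        have hm' : ν m ≤ α := hm
        rw [LinearMap.mem_eqLocus, Lam_monomial, one_mul]
        simp only [t, dif_pos hm']
        rfl
      exact this hg
    have hr1 : Lam D t r' = 1 := by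
      apply hι
      rw [← Lam_map, hLC _ hr, hl, map_one]
    have hz : ∀ i ∈ J, ∀ m, ν m ≤ α - 1 → Lam D t (h' i * monomial m 1) = 0 := by
      intro i hi m hm
      apply hι
      have hmem : h i * monomial m 1 ∈ WW ν h J (α - 1) :=
        mul_mem_WW hi (monomial_mem_SN (show ν m ≤ α - 1 from hm) 1)
      rw [← Lam_map, map_mul, hh', map_monomial, map_one, hLC _ (WW_le_FN hν hh hmem), hl' _ hmem,
        map_zero]
    have hr2 : Lam K (fun m => φ (t m)) (map φ r') = 1 := by rw [Lam_map, hr1, map_one]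
    have hr3 : Lam K (fun m => φ (t m)) (map φ r') = 0 := by
      obtain ⟨u, hu, hue⟩ := key
      rw [hue, map_sum]
      refine Finset.sum_eq_zero fun i hi => ?_
      have : FN K ν (α - 1) ≤ LinearMap.ker
          ((Lam K (fun m => φ (t m))).comp (LinearMap.mulLeft K (map φ (h' i)))) := by
        refine SN_le fun m hm => ?_
        have := hz i hi m hm
        rw [LinearMap.mem_ker, LinearMap.comp_apply, LinearMap.mulLeft_apply]
        have e : map φ (h' i) * monomial m 1 = map φ (h' i * monomial m 1) := by
          rw [map_mul, map_monomial, map_one φ]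
        rw [e, Lam_map, this, map_zero]
      exact this (hu i)
    rw [hr2] at hr3
    exact one_ne_zero hr3
  · intro v hv
    refine ⟨fun i => map φ (w' v i), fun i => transf _ _ (by rw [hw' v hv]; exact hw1 v hv i), ?_⟩
    have e : monomial (N • v) (1 : K) - ∑ i, map φ (h' i) * map φ (w' v i)
        = map φ (monomial (N • v) 1 - ∑ i, h' i * w' v i) := by
      simp [map_monomial]
    rw [e]
    apply transf
    have e2 : map ι (monomial (N • v) 1 - ∑ i, h' i * w' v i)
        = monomial (N • v) 1 - ∑ i, h i * w v i := by
      simp only [map_sub, map_sum, map_mul, map_monomial, map_one, hh', hw' v hv]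
    rw [e2]
    exact hw2 v hv
  · have := congrArg (map φ) hsD
    simpa using this

end TNProof

namespace TNProof
set_option linter.unusedSectionVars false
section count
variable {σ τ : Type*} [Finite σ] [Fintype τ] [DecidableEq τ]
    {ν : (σ →₀ ℕ) → ℝ} {V : Finset (σ →₀ ℕ)}

/-- uniform regularity -/
def UU (ν : (σ →₀ ℕ) → ℝ) (h : τ → MvPolynomial σ ℂ) : Prop :=
  ∀ (J : Finset τ) (α : ℝ) (r : MvPolynomial σ ℂ), r ∈ FN ℂ ν α → ∀ s : τ → MvPolynomial σ ℂ,
    (∏ j ∈ Jᶜ, h j) * r = ∑ i ∈ J, h i * s i → r ∈ WW ν h J (α - 1)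

lemma finrank_map_inj {M M' : Type*} [AddCommGroup M] [Module ℂ M] [AddCommGroup M'] [Module ℂ M']
    (l : M →ₗ[ℂ] M') (hl : Function.Injective l) (P : Submodule ℂ M) :
    Module.finrank ℂ (P.map l) = Module.finrank ℂ P :=
  (Submodule.equivMapOfInjective l hl P).finrank_eq.symm

lemma FN_fd (hν : NuData ν V) (α : ℝ) : FiniteDimensional ℂ (FN ℂ ν α) := by
  classical
  have : FN ℂ ν α ≤ Submodule.span ℂ
      ((fun m : σ →₀ ℕ => (monomial m (1 : ℂ) : MvPolynomial σ ℂ)) '' {m | ν m ≤ α}) :=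
    SN_le fun m hm => Submodule.subset_span ⟨m, hm, rfl⟩
  have hfin := FiniteDimensional.span_of_finite ℂ ((hν.finite α).image
    (fun m : σ →₀ ℕ => (monomial m (1 : ℂ) : MvPolynomial σ ℂ)))
  exact Submodule.finiteDimensional_of_le this

lemma WW_fd (hν : NuData ν V) {h : τ → MvPolynomial σ ℂ} (hh : ∀ i, h i ∈ FN ℂ ν 1)
    (J : Finset τ) (γ : ℝ) : FiniteDimensional ℂ (WW ν h J γ) := by
  have h1 := WW_le_FN hν hh (J := J) (γ := γ + 1)
  rw [add_sub_cancel_right] at h1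
  have := FN_fd hν (γ + 1)
  exact Submodule.finiteDimensional_of_le h1

lemma WW_empty (h : τ → MvPolynomial σ ℂ) (γ : ℝ) : WW ν h ∅ γ = ⊥ := by
  rw [eq_bot_iff]
  rintro x ⟨s, -, rfl⟩
  simp

lemma h_ne (hν : NuData ν V) {h : τ → MvPolynomial σ ℂ} (hU : UU ν h) (j : τ) : h j ≠ 0 := by
  intro h0
  have := hU ∅ 0 1 (one_mem_FN hν) 0 (by
    rw [Finset.prod_eq_zero (i := j) (by simp) h0]; simp)
  rw [WW_empty, Submodule.mem_bot] at this
  exact one_ne_zero this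

lemma WW_insert (hν : NuData ν V) {h : τ → MvPolynomial σ ℂ} (hh : ∀ i, h i ∈ FN ℂ ν 1)
    (hU : UU ν h) (J : Finset τ) (j : τ) (hj : j ∉ J) (γ : ℝ) :
    Module.finrank ℂ (WW ν h (insert j J) γ) + Module.finrank ℂ (WW ν h J (γ - 1)) =
      Module.finrank ℂ (WW ν h J γ) + Module.finrank ℂ (FN ℂ ν γ) := by
  let M := LinearMap.mulLeft ℂ (h j)
  have hM : Function.Injective M := mul_right_injective₀ (h_ne hν hU j)
  have e1 : WW ν h (insert j J) γ = WW ν h J γ ⊔ (FN ℂ ν γ).map M := by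
    apply le_antisymm
    · rintro x ⟨s, hs, rfl⟩
      rw [Finset.sum_insert hj, add_comm]
      exact Submodule.add_mem_sup ⟨s, hs, rfl⟩ ⟨s j, hs j, rfl⟩
    · refine sup_le (WW_mono (Finset.subset_insert _ _) le_rfl) ?_
      rintro x ⟨y, hy, rfl⟩
      exact mul_mem_WW (Finset.mem_insert_self _ _) hy
  have e2 : WW ν h J γ ⊓ (FN ℂ ν γ).map M = (WW ν h J (γ - 1)).map M := by
    apply le_antisymm
    · rintro x ⟨⟨s, hs, hx⟩, ⟨y, hy, rfl⟩⟩
      refine ⟨y, ?_, rfl⟩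
      refine hU J γ y hy (fun i => (∏ k ∈ (Jᶜ).erase j, h k) * s i) ?_
      have hx' : h j * y = ∑ i ∈ J, h i * s i := hx
      rw [← Finset.prod_erase_mul _ _ (Finset.mem_compl.mpr hj), mul_assoc, hx', Finset.mul_sum]
      exact Finset.sum_congr rfl fun i _ => by ring
    · rintro x ⟨y, hy, rfl⟩
      refine ⟨?_, ⟨y, WW_le_FN hν hh hy, rfl⟩⟩
      have := mul_WW hν (hh j) hy
      rwa [add_sub_cancel] at this
  have := FN_fd hν γ
  have := WW_fd hν hh J γ
  have h3 := Submodule.finrank_sup_add_finrank_inf_eq (WW ν h J γ) ((FN ℂ ν γ).map M)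
  rw [← e1, e2, finrank_map_inj M hM, finrank_map_inj M hM] at h3
  exact h3

lemma WW_finrank_eq {V' : Finset (σ →₀ ℕ)} (hν : NuData ν V) (hν' : NuData ν V')
    {h h' : τ → MvPolynomial σ ℂ} (hh : ∀ i, h i ∈ FN ℂ ν 1) (hh' : ∀ i, h' i ∈ FN ℂ ν 1)
    (hU : UU ν h) (hU' : UU ν h') (J : Finset τ) : ∀ γ,
    Module.finrank ℂ (WW ν h J γ) = Module.finrank ℂ (WW ν h' J γ) := by
  induction J using Finset.induction_on with
  | empty => intro γ; rw [WW_empty, WW_empty]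
  | insert j J hj ih =>
    intro γ
    have h1 := WW_insert hν hh hU J j hj γ
    have h2 := WW_insert hν' hh' hU' J j hj γ
    rw [ih, ih] at h1
    omega

lemma ideal_inf (hν : NuData ν V) {h : τ → MvPolynomial σ ℂ} (hh : ∀ i, h i ∈ FN ℂ ν 1)
    (hU : UU ν h) (α : ℝ) :
    (Ideal.span (Set.range h)).restrictScalars ℂ ⊓ FN ℂ ν α = WW ν h Finset.univ (α - 1) := by
  apply le_antisymm
  · rintro x ⟨hx, hx'⟩
    have hx1 : x ∈ Ideal.span (Set.range h) := hx
    obtain ⟨c, hc⟩ := (Ideal.mem_span_range_iff_exists_fun).mp hx1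
    refine hU Finset.univ α x hx' c ?_
    simp only [Finset.compl_univ, Finset.prod_empty, one_mul, ← hc]
    exact Finset.sum_congr rfl fun i _ => mul_comm _ _
  · refine le_inf ?_ (WW_le_FN hν hh)
    rintro x ⟨s, hs, rfl⟩
    change _ ∈ Ideal.span (Set.range h)
    exact Ideal.sum_mem _ fun i _ => Ideal.mul_mem_right _ _ (Ideal.subset_span ⟨i, rfl⟩)

lemma FNlt_eq (hν : NuData ν V) (α : ℝ) : ∃ α' < α, FNlt ℂ ν α = FN ℂ ν α' := by
  classical
  let F := (hν.finite α).toFinset.filter (fun m => ν m < α)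
  have hF : ∀ m, m ∈ F ↔ ν m < α := by
    intro m; simp only [F, Finset.mem_filter, Set.Finite.mem_toFinset]
    exact ⟨fun h => h.2, fun h => ⟨le_of_lt h, h⟩⟩
  suffices ∃ α' < α, ∀ m, ν m < α → ν m ≤ α' by
    obtain ⟨α', h1, h2⟩ := this
    refine ⟨α', h1, le_antisymm (SN_mono h2) (SN_mono fun m hm => ?_)⟩
    exact lt_of_le_of_lt hm h1
  by_cases hne : F.Nonempty
  · obtain ⟨m, hm, hmax⟩ := F.exists_max_image ν hne
    exact ⟨ν m, (hF m).mp hm, fun m' hm' => hmax m' ((hF m').mpr hm')⟩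
  · refine ⟨α - 1, by linarith, fun m hm => ?_⟩
    exact absurd ⟨m, (hF m).mpr hm⟩ hne

lemma finrank_map_mkQ {M : Type*} [AddCommGroup M] [Module ℂ M] (P Q : Submodule ℂ M)
    [FiniteDimensional ℂ P] :
    Module.finrank ℂ (P.map Q.mkQ) + Module.finrank ℂ (P ⊓ Q : Submodule ℂ M) =
      Module.finrank ℂ P := by
  have h := LinearMap.finrank_range_add_finrank_ker (Q.mkQ.domRestrict P)
  rw [← h]
  congr 1
  · rw [LinearMap.range_domRestrict]
  · have e : (P ⊓ Q : Submodule ℂ M) = (LinearMap.ker (Q.mkQ.domRestrict P)).map P.subtype := by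
      ext x
      simp only [Submodule.mem_inf, Submodule.mem_map, LinearMap.mem_ker,
        LinearMap.domRestrict_apply, Submodule.mkQ_apply, Submodule.Quotient.mk_eq_zero]
      constructor
      · rintro ⟨h1, h2⟩; exact ⟨⟨x, h1⟩, h2, rfl⟩
      · rintro ⟨y, hy, rfl⟩; exact ⟨y.2, hy⟩
    rw [e, finrank_map_inj _ P.subtype_injective]

lemma gr_count (hν : NuData ν V) {h : τ → MvPolynomial σ ℂ} (hh : ∀ i, h i ∈ FN ℂ ν 1)
    (hU : UU ν h) {α α' : ℝ} (hα : α' < α) (hF : FNlt ℂ ν α = FN ℂ ν α') :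
    Module.finrank ℂ (Submodule.map
      (FNlt ℂ ν α ⊔ (Ideal.span (Set.range h)).restrictScalars ℂ).mkQ
      (FN ℂ ν α ⊔ (Ideal.span (Set.range h)).restrictScalars ℂ)) +
      Module.finrank ℂ (FNlt ℂ ν α) + Module.finrank ℂ (WW ν h Finset.univ (α - 1)) =
      Module.finrank ℂ (FN ℂ ν α) + Module.finrank ℂ (WW ν h Finset.univ (α' - 1)) := by
  set L := (Ideal.span (Set.range h)).restrictScalars ℂ with hL
  have e0 : Submodule.map (FNlt ℂ ν α ⊔ L).mkQ (FN ℂ ν α ⊔ L)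
      = Submodule.map (FNlt ℂ ν α ⊔ L).mkQ (FN ℂ ν α) := by
    rw [Submodule.map_sup]
    apply sup_eq_left.mpr
    have : Submodule.map (FNlt ℂ ν α ⊔ L).mkQ L = ⊥ := by
      rw [← LinearMap.le_ker_iff_map, Submodule.ker_mkQ]
      exact le_sup_right
    rw [this]; exact bot_le
  have := FN_fd hν α
  have := FN_fd hν α'
  have h1 := finrank_map_mkQ (FN ℂ ν α) (FNlt ℂ ν α ⊔ L)
  have e1 : FN ℂ ν α ⊓ (FNlt ℂ ν α ⊔ L) = FNlt ℂ ν α ⊔ WW ν h Finset.univ (α - 1) := by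
    rw [inf_comm, sup_inf_assoc_of_le _ FNlt_le, hL, ideal_inf hν hh hU]
  have e2 : FNlt ℂ ν α ⊓ WW ν h Finset.univ (α - 1) = WW ν h Finset.univ (α' - 1) := by
    rw [hF]
    apply le_antisymm
    · rw [← ideal_inf hν hh hU α']
      refine le_inf (inf_le_right.trans ?_) inf_le_left
      rw [← ideal_inf hν hh hU α]
      exact inf_le_left
    · exact le_inf (WW_le_FN hν hh) (WW_mono subset_rfl (by linarith))
  have := WW_fd hν hh Finset.univ (α - 1)
  have : FiniteDimensional ℂ (FNlt ℂ ν α) := by rw [hF]; infer_instance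
  have h2 := Submodule.finrank_sup_add_finrank_inf_eq (FNlt ℂ ν α) (WW ν h Finset.univ (α - 1))
  rw [e1] at h1
  rw [e2] at h2
  rw [e0]
  omega

theorem gr_eq {V' : Finset (σ →₀ ℕ)} (hν : NuData ν V) (hν' : NuData ν V')
    {h h' : τ → MvPolynomial σ ℂ} (hh : ∀ i, h i ∈ FN ℂ ν 1) (hh' : ∀ i, h' i ∈ FN ℂ ν 1)
    (hU : UU ν h) (hU' : UU ν h') (α : ℝ) :
    Module.finrank ℂ (Submodule.map
      (FNlt ℂ ν α ⊔ (Ideal.span (Set.range h)).restrictScalars ℂ).mkQ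
      (FN ℂ ν α ⊔ (Ideal.span (Set.range h)).restrictScalars ℂ)) =
    Module.finrank ℂ (Submodule.map
      (FNlt ℂ ν α ⊔ (Ideal.span (Set.range h')).restrictScalars ℂ).mkQ
      (FN ℂ ν α ⊔ (Ideal.span (Set.range h')).restrictScalars ℂ)) := by
  obtain ⟨α', h1, h2⟩ := FNlt_eq hν α
  have h3 := gr_count hν hh hU h1 h2
  have h4 := gr_count hν' hh' hU' h1 h2
  rw [WW_finrank_eq hν hν' hh hh' hU hU', WW_finrank_eq hν hν' hh hh' hU hU'] at h3
  omega

end count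
end TNProof

namespace TNProof
open ToricNewton
open scoped Pointwise
set_option linter.unusedSectionVars false
section gauge
variable {σ : Type*} [Fintype σ] [DecidableEq σ]

/-- the dilated polytope, by explicit combinations -/
def QQ (f : MvPolynomial σ ℂ) (r : ℝ) : Set (σ → ℝ) :=
  {x | ∃ c : (σ →₀ ℕ) → ℝ, (∀ v, 0 ≤ c v) ∧ x = ∑ v ∈ f.support, c v • toR v ∧
    ∑ v ∈ f.support, c v ≤ r}

lemma toR_add (a b : σ →₀ ℕ) : toR (a + b) = toR a + toR b := by
  ext i; simp [toR]

lemma toR_smul (k : ℕ) (a : σ →₀ ℕ) : toR (k • a) = (k : ℝ) • toR a := by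
  ext i; simp [toR]

lemma toR_zero : toR (0 : σ →₀ ℕ) = 0 := by
  ext i; simp [toR]

lemma QQ_mono {f : MvPolynomial σ ℂ} {r r' : ℝ} (h : r ≤ r') {x : σ → ℝ} (hx : x ∈ QQ f r) :
    x ∈ QQ f r' := by
  obtain ⟨c, h1, h2, h3⟩ := hx
  exact ⟨c, h1, h2, h3.trans h⟩

lemma QQ_add {f : MvPolynomial σ ℂ} {r r' : ℝ} {x y : σ → ℝ} (hx : x ∈ QQ f r)
    (hy : y ∈ QQ f r') : x + y ∈ QQ f (r + r') := by
  obtain ⟨c, h1, rfl, h3⟩ := hx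
  obtain ⟨d, h1', rfl, h3'⟩ := hy
  refine ⟨c + d, fun v => add_nonneg (h1 v) (h1' v), ?_, ?_⟩
  · simp [add_smul, Finset.sum_add_distrib]
  · simp only [Pi.add_apply, Finset.sum_add_distrib]; linarith

lemma QQ_smul {f : MvPolynomial σ ℂ} {r t : ℝ} (ht : 0 ≤ t) {x : σ → ℝ} (hx : x ∈ QQ f r) :
    t • x ∈ QQ f (t * r) := by
  obtain ⟨c, h1, rfl, h3⟩ := hx
  refine ⟨fun v => t * c v, fun v => mul_nonneg ht (h1 v), ?_, ?_⟩
  · simp [Finset.smul_sum, smul_smul]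
  · rw [← Finset.mul_sum]; exact mul_le_mul_of_nonneg_left h3 ht

lemma QQ_vert {f : MvPolynomial σ ℂ} {v : σ →₀ ℕ} (hv : v ∈ f.support) : toR v ∈ QQ f 1 := by
  classical
  refine ⟨fun w => if w = v then 1 else 0, fun w => by dsimp only; split_ifs <;> norm_num, ?_, ?_⟩
  · rw [Finset.sum_congr rfl (fun w _ => ite_smul _ _ _ _)]
    simp only [one_smul, zero_smul]
    rw [Finset.sum_ite_eq', if_pos hv]
  · rw [Finset.sum_ite_eq', if_pos hv]

lemma zero_mem_P (f : MvPolynomial σ ℂ) : (0 : σ → ℝ) ∈ newtonPolytope f :=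
  subset_convexHull _ _ (Or.inl rfl)

lemma P_eq (f : MvPolynomial σ ℂ) : newtonPolytope f = QQ f 1 := by
  apply Set.Subset.antisymm
  · refine convexHull_min ?_ ?_
    · rintro x (hx | ⟨v, hv, rfl⟩)
      · rw [Set.mem_singleton_iff] at hx
        subst hx
        exact ⟨0, fun _ => le_rfl, by simp, by simp⟩
      · exact QQ_vert hv
    · intro x hx y hy a b ha hb hab
      have := QQ_add (QQ_smul ha hx) (QQ_smul hb hy)
      rwa [mul_one, mul_one, hab] at this
  · rintro x ⟨c, h1, rfl, h3⟩
    set t := ∑ v ∈ f.support, c v with ht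
    have hconv : Convex ℝ (newtonPolytope f) := convex_convexHull _ _
    have ht0 : 0 ≤ t := Finset.sum_nonneg fun v _ => h1 v
    rcases ht0.eq_or_lt with h0 | h0
    · have : ∀ v ∈ f.support, c v = 0 :=
        (Finset.sum_eq_zero_iff_of_nonneg fun v _ => h1 v).mp (ht ▸ h0.symm)
      rw [Finset.sum_eq_zero fun v hv => by rw [this v hv, zero_smul]]
      exact zero_mem_P f
    · have hy : ∑ v ∈ f.support, (c v / t) • toR v ∈ newtonPolytope f := by
        refine hconv.sum_mem (fun v _ => div_nonneg (h1 v) ht0) ?_ ?_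
        · rw [← Finset.sum_div, ← ht, div_self h0.ne']
        · intro v hv
          exact subset_convexHull _ _ (Or.inr ⟨v, hv, rfl⟩)
      have := hconv.smul_mem_of_zero_mem (zero_mem_P f) hy ⟨ht0, h3⟩
      rw [Finset.smul_sum] at this
      convert this using 2 with v hv
      rw [smul_smul, mul_div_cancel₀ _ h0.ne']

lemma mem_smul_P {f : MvPolynomial σ ℂ} {r : ℝ} (hr : 0 < r) {x : σ → ℝ} :
    x ∈ r • newtonPolytope f ↔ x ∈ QQ f r := by
  rw [P_eq, Set.mem_smul_set_iff_inv_smul_mem₀ hr.ne']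
  constructor
  · intro h
    have := QQ_smul hr.le h
    rwa [smul_inv_smul₀ hr.ne', mul_one] at this
  · intro h
    have := QQ_smul (inv_nonneg.mpr hr.le) h
    rwa [inv_mul_cancel₀ hr.ne'] at this

lemma QQ_exists {f : MvPolynomial σ ℂ} (hf : Convenient f) (m : σ →₀ ℕ) :
    ∃ r, 0 < r ∧ toR m ∈ QQ f r := by
  induction m using Finsupp.induction_linear with
  | zero => exact ⟨1, one_pos, 0, fun _ => le_rfl, by simp [toR_zero], by simp⟩
  | add a b ha hb =>
    obtain ⟨r, h1, h2⟩ := ha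
    obtain ⟨r', h1', h2'⟩ := hb
    exact ⟨r + r', add_pos h1 h1', by rw [toR_add]; exact QQ_add h2 h2'⟩
  | single i k =>
    obtain ⟨n, hn, hc⟩ := hf i
    refine ⟨(k : ℝ) / n + 1, by positivity, ?_⟩
    have h1 := QQ_smul (t := (k : ℝ) / n) (by positivity) (QQ_vert (mem_support_iff.mpr hc))
    have e : toR (Finsupp.single i k) = ((k : ℝ) / n) • toR (Finsupp.single i n) := by
      have hn0 : (n : ℝ) ≠ 0 := by positivity
      ext j
      by_cases hj : j = i
      · subst hj; simp [toR, hn0]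
      · simp [toR, Ne.symm hj]
    rw [e]
    exact QQ_mono (by linarith) h1

lemma QQ_bound (f : MvPolynomial σ ℂ) : ∃ L : ℝ, 0 ≤ L ∧ ∀ r, ∀ x ∈ QQ f r, ∀ i,
    0 ≤ x i ∧ x i ≤ L * r := by
  classical
  let L : ℝ := ∑ v ∈ f.support, ∑ i, (v i : ℝ)
  have hL : ∀ v ∈ f.support, ∀ i, (v i : ℝ) ≤ L := by
    intro v hv i
    refine (Finset.single_le_sum (f := fun i => (v i : ℝ)) (fun _ _ => Nat.cast_nonneg _)
      (Finset.mem_univ i)).trans ?_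
    exact Finset.single_le_sum (f := fun v : σ →₀ ℕ => ∑ i, (v i : ℝ))
      (fun _ _ => Finset.sum_nonneg fun _ _ => Nat.cast_nonneg _) hv
  have hL0 : 0 ≤ L := Finset.sum_nonneg fun _ _ => Finset.sum_nonneg fun _ _ => Nat.cast_nonneg _
  refine ⟨L, hL0, ?_⟩
  rintro r x ⟨c, h1, rfl, h3⟩ i
  simp only [Finset.sum_apply, Pi.smul_apply, smul_eq_mul]
  constructor
  · exact Finset.sum_nonneg fun v _ => mul_nonneg (h1 v) (Nat.cast_nonneg _)
  · calc ∑ v ∈ f.support, c v * toR v i ≤ ∑ v ∈ f.support, c v * L :=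
        Finset.sum_le_sum fun v hv => mul_le_mul_of_nonneg_left (hL v hv i) (h1 v)
      _ = L * ∑ v ∈ f.support, c v := by rw [← Finset.sum_mul, mul_comm]
      _ ≤ L * r := mul_le_mul_of_nonneg_left h3 hL0

lemma P_closed (f : MvPolynomial σ ℂ) : IsClosed (newtonPolytope f) :=
  (Set.Finite.isCompact_convexHull ℝ
    ((Set.finite_singleton _).union (f.support.finite_toSet.image _))).isClosed

/-- closedness of the family in the limit -/
lemma QQ_lim {f : MvPolynomial σ ℂ} {r : ℝ} (hr : 0 ≤ r) {x : σ → ℝ}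
    (h : ∀ r' > r, x ∈ QQ f r') : x ∈ QQ f r := by
  rcases hr.eq_or_lt with h0 | h0
  · subst h0
    obtain ⟨L, hL, hb⟩ := QQ_bound f
    have : x = 0 := by
      ext i
      refine le_antisymm ?_ (hb 1 x (h 1 one_pos) i).1
      refine le_of_forall_pos_le_add fun ε hε => ?_
      have h1 := (hb (ε / (L + 1)) x (h _ (by positivity)) i).2
      have h2 : L * (ε / (L + 1)) ≤ ε := by
        rw [← mul_div_assoc, div_le_iff₀ (by positivity)]; nlinarith
      simp only [Pi.zero_apply]; linarith
    rw [this]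
    exact ⟨0, fun _ => le_rfl, by simp, by simp⟩
  · rw [← mem_smul_P h0, Set.mem_smul_set_iff_inv_smul_mem₀ h0.ne']
    have ht : Filter.Tendsto (fun t : ℝ => t⁻¹ • x) (nhdsWithin r (Set.Ioi r)) (nhds (r⁻¹ • x)) := by
      refine Filter.Tendsto.mono_left ?_ nhdsWithin_le_nhds
      exact (tendsto_inv₀ h0.ne').smul tendsto_const_nhds
    refine (P_closed f).mem_of_tendsto ht ?_
    filter_upwards [self_mem_nhdsWithin] with t ht
    have ht0 : 0 < t := h0.trans ht
    rw [← Set.mem_smul_set_iff_inv_smul_mem₀ ht0.ne', mem_smul_P ht0]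
    exact h t ht

lemma nu_le_iff {f : MvPolynomial σ ℂ} (hf : Convenient f) (m : σ →₀ ℕ) {r : ℝ} (hr : 0 ≤ r) :
    nu f (toR m) ≤ r ↔ toR m ∈ QQ f r := by
  rw [nu, gauge_def]
  have hbdd : BddBelow {r | r ∈ Set.Ioi (0 : ℝ) ∧ toR m ∈ r • newtonPolytope f} :=
    ⟨0, fun r hr => le_of_lt hr.1⟩
  constructor
  · intro h
    refine QQ_lim hr fun r' hr' => ?_
    obtain ⟨r0, h1, h2⟩ := QQ_exists hf m
    have hne : {r | r ∈ Set.Ioi (0 : ℝ) ∧ toR m ∈ r • newtonPolytope f}.Nonempty :=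
      ⟨r0, h1, (mem_smul_P h1).mpr h2⟩
    obtain ⟨t, ⟨ht0, ht⟩, htr⟩ := exists_lt_of_csInf_lt hne (lt_of_le_of_lt h hr')
    exact QQ_mono htr.le ((mem_smul_P ht0).mp ht)
  · intro h
    refine le_of_forall_pos_le_add fun ε hε => ?_
    have h0 : 0 < r + ε := by linarith
    exact csInf_le hbdd ⟨h0, (mem_smul_P h0).mpr (QQ_mono (by linarith) h)⟩

/-- the Newton function on exponents -/
noncomputable def nn (f : MvPolynomial σ ℂ) (m : σ →₀ ℕ) : ℝ := nu f (toR m)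

/-- the points of the support on the Newton boundary -/
noncomputable def VV (f : MvPolynomial σ ℂ) : Finset (σ →₀ ℕ) :=
  open Classical in f.support.filter (fun v => nn f v = 1)

lemma mem_VV {f : MvPolynomial σ ℂ} {v : σ →₀ ℕ} : v ∈ VV f ↔ v ∈ f.support ∧ nn f v = 1 := by
  classical
  simp [VV]

lemma nn_nonneg (f : MvPolynomial σ ℂ) (m : σ →₀ ℕ) : 0 ≤ nn f m := gauge_nonneg _

lemma nn_mem {f : MvPolynomial σ ℂ} (hf : Convenient f) (m : σ →₀ ℕ) : toR m ∈ QQ f (nn f m) :=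
  (nu_le_iff hf m (nn_nonneg f m)).mp le_rfl

lemma nn_sub {f : MvPolynomial σ ℂ} (hf : Convenient f) (a b : σ →₀ ℕ) :
    nn f (a + b) ≤ nn f a + nn f b := by
  refine (nu_le_iff hf _ (add_nonneg (nn_nonneg f a) (nn_nonneg f b))).mpr ?_
  rw [toR_add]; exact QQ_add (nn_mem hf a) (nn_mem hf b)

lemma nn_vert {f : MvPolynomial σ ℂ} (hf : Convenient f) {v : σ →₀ ℕ} (hv : v ∈ f.support) :
    nn f v ≤ 1 := (nu_le_iff hf v zero_le_one).mpr (QQ_vert hv)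

theorem nuData {f : MvPolynomial σ ℂ} (hf : Convenient f) : NuData (nn f) (VV f) where
  zero := by rw [nn, toR_zero, nu, gauge_zero]
  nonneg := nn_nonneg f
  sub := nn_sub hf
  bound := by
    obtain ⟨L, hL, hb⟩ := QQ_bound f
    exact ⟨L, hL, fun m i => (hb _ _ (nn_mem hf m) i).2⟩
  vone := fun v hv => (mem_VV.mp hv).2
  step := by
    classical
    refine ⟨f.support.card, fun m hm => ?_⟩
    obtain ⟨c, h1, h2, h3⟩ := nn_mem hf m
    have hle : nn f m ≤ ∑ v ∈ f.support, c v :=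
      (nu_le_iff hf m (Finset.sum_nonneg fun v _ => h1 v)).mpr ⟨c, h1, h2, le_rfl⟩
    have : ∃ v ∈ f.support, 1 ≤ c v := by
      by_contra hcon
      push Not at hcon
      have h4 : ∑ v ∈ f.support, c v ≤ ∑ v ∈ f.support, (1 : ℝ) :=
        Finset.sum_le_sum fun v hv => (hcon v hv).le
      simp at h4
      linarith
    obtain ⟨v, hv, hcv⟩ := this
    have hvm : v ≤ m := by
      intro i
      have h4 := congrFun h2 i
      simp only [Finset.sum_apply, Pi.smul_apply, smul_eq_mul] at h4
      have h5 : c v * toR v i ≤ toR m i := by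
        rw [h4]
        exact Finset.single_le_sum (f := fun v => c v * toR v i)
          (fun w _ => mul_nonneg (h1 w) (Nat.cast_nonneg _)) hv
      have h6 : (v i : ℝ) ≤ m i := by
        have h7 : (0 : ℝ) ≤ v i := Nat.cast_nonneg _
        have h8 : c v * (v i : ℝ) ≤ m i := h5
        nlinarith
      exact_mod_cast h6
    obtain ⟨m', rfl⟩ : ∃ m', m = m' + v := ⟨m - v, (tsub_add_cancel_of_le hvm).symm⟩
    have hm' : nn f m' ≤ nn f (m' + v) - 1 := by
      have hcard : (1 : ℝ) ≤ f.support.card := by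
        exact_mod_cast Finset.card_pos.mpr ⟨v, hv⟩
      refine (nu_le_iff hf m' (by linarith)).mpr
        ⟨fun w => c w - if w = v then 1 else 0, fun w => ?_, ?_, ?_⟩
      · dsimp only
        split_ifs with hw
        · subst hw; linarith
        · simpa using h1 w
      · simp only [sub_smul, Finset.sum_sub_distrib, ite_smul, one_smul, zero_smul]
        rw [← h2, Finset.sum_ite_eq', if_pos hv, toR_add, add_sub_cancel_right]
      · rw [Finset.sum_sub_distrib, Finset.sum_ite_eq', if_pos hv]; linarith
    refine ⟨v, mem_VV.mpr ⟨hv, ?_⟩, m', rfl, by linarith⟩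
    have h5 := nn_sub hf m' v
    have h6 := nn_vert hf hv
    linarith
  lim := by
    intro m a β C h
    have hβ : 0 ≤ β := by
      by_contra hcon
      push Not at hcon
      obtain ⟨k, hk⟩ := exists_nat_gt (C / (-β))
      obtain ⟨q, hq, hle⟩ := h k
      have h1 := nn_nonneg f (q • m + a)
      have h2 : (k : ℝ) ≤ q := by exact_mod_cast hq
      rw [div_lt_iff₀ (by linarith)] at hk
      nlinarith
    refine le_of_forall_pos_le_add fun ε hε => ?_
    set γ := β + ε with hγ
    have hγ0 : 0 < γ := by linarith
    choose q hq hle using h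
    have hqt : Filter.Tendsto (fun k => (q k : ℝ)) Filter.atTop Filter.atTop :=
      tendsto_natCast_atTop_atTop.comp (Filter.tendsto_atTop_mono hq Filter.tendsto_id)
    have hinv : Filter.Tendsto (fun k => (q k : ℝ)⁻¹) Filter.atTop (nhds 0) :=
      tendsto_inv_atTop_zero.comp hqt
    have ht : Filter.Tendsto (fun k => γ⁻¹ • (toR m + (q k : ℝ)⁻¹ • toR a)) Filter.atTop
        (nhds (γ⁻¹ • (toR m + (0 : ℝ) • toR a))) :=
      (tendsto_const_nhds.add (hinv.smul_const (toR a))).const_smul γ⁻¹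
    rw [zero_smul, add_zero] at ht
    refine (nu_le_iff hf m hγ0.le).mpr ?_
    rw [← mem_smul_P hγ0, Set.mem_smul_set_iff_inv_smul_mem₀ hγ0.ne']
    refine (P_closed f).mem_of_tendsto ht ?_
    filter_upwards [hqt.eventually_ge_atTop (|C| / ε), hqt.eventually_gt_atTop 0] with k hk hk0
    rw [← Set.mem_smul_set_iff_inv_smul_mem₀ hγ0.ne', mem_smul_P hγ0]
    rw [div_le_iff₀ hε] at hk
    have h1 := QQ_smul (inv_nonneg.mpr hk0.le) (nn_mem hf (q k • m + a))
    rw [toR_add, toR_smul, smul_add, inv_smul_smul₀ hk0.ne'] at h1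
    refine QQ_mono ?_ h1
    rw [inv_mul_le_iff₀ hk0]
    have h2 := hle k
    have h3 := le_abs_self C
    rw [hγ]
    linarith

end gauge
end TNProof

namespace TNProof

universe u v

theorem gordan {ι : Type v} (s : Finset ι) : ∀ (W : Type u) [AddCommGroup W] [Module ℚ W]
    (x : ι → W), (∃ l : W →ₗ[ℚ] ℚ, ∀ i ∈ s, 0 < l (x i)) ∨
      ∃ c : ι → ℚ, (∀ i, 0 ≤ c i) ∧ (∃ i ∈ s, 0 < c i) ∧ ∑ i ∈ s, c i • x i = 0 := by
  classical
  induction s using Finset.induction_on with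
  | empty => intro W _ _ x; exact Or.inl ⟨0, by simp⟩
  | insert j s hj ih =>
    intro W _ _ x
    have ext0 : ∀ (c : ι → ℚ) (t : ℚ), ∑ i ∈ insert j s, (if i = j then t else c i) • x i
        = t • x j + ∑ i ∈ s, c i • x i := by
      intro c t
      rw [Finset.sum_insert hj, if_pos rfl]
      congr 1
      refine Finset.sum_congr rfl fun i hi => ?_
      rw [if_neg (by rintro rfl; exact hj hi)]
    have extc : ∀ (c : ι → ℚ) (t : ℚ), (∀ i, 0 ≤ c i) → 0 ≤ t → ∀ i, 0 ≤ (if i = j then t else c i) := by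
      intro c t hc ht i; split_ifs
      exacts [ht, hc i]
    rcases ih W x with ⟨l, hl⟩ | ⟨c, hc, ⟨i, hi, hci⟩, hsum⟩
    swap
    · refine Or.inr ⟨fun i => if i = j then 0 else c i, extc c 0 hc le_rfl,
        ⟨i, Finset.mem_insert_of_mem hi, ?_⟩, ?_⟩
      · dsimp only; rw [if_neg (by rintro rfl; exact hj hi)]; exact hci
      · rw [ext0, hsum]; simp
    by_cases hlj : 0 < l (x j)
    · refine Or.inl ⟨l, fun i hi => ?_⟩
      rcases Finset.mem_insert.mp hi with rfl | hi
      · exact hlj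
      · exact hl i hi
    by_cases hxj : x j = 0
    · refine Or.inr ⟨fun i => if i = j then 1 else 0, extc 0 1 (fun _ => le_rfl) zero_le_one,
        ⟨j, Finset.mem_insert_self _ _, by simp⟩, ?_⟩
      have := ext0 0 1
      simp only [Pi.zero_apply] at this
      rw [this, hxj]; simp
    let Z := Submodule.span ℚ {x j}
    rcases ih (W ⧸ Z) (fun i => Z.mkQ (x i)) with ⟨l', hl'⟩ | ⟨c, hc, ⟨i, hi, hci⟩, hsum⟩
    · left
      obtain ⟨μ, hμ⟩ : ∃ μ : W →ₗ[ℚ] ℚ, μ (x j) ≠ 0 := by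
        by_contra hcon
        push Not at hcon
        exact hxj ((Module.forall_dual_apply_eq_zero_iff ℚ (x j)).mp hcon)
      let μ' : W →ₗ[ℚ] ℚ := (μ (x j))⁻¹ • μ
      have hμ' : μ' (x j) = 1 := by simp [μ', hμ]
      let l'' : W →ₗ[ℚ] ℚ := l'.comp Z.mkQ
      have hl''j : l'' (x j) = 0 := by
        have : Z.mkQ (x j) = 0 := by
          rw [Submodule.mkQ_apply, Submodule.Quotient.mk_eq_zero]
          exact Submodule.mem_span_singleton_self _
        simp only [l'', LinearMap.comp_apply, this, map_zero]
      have hM : ∃ M : ℚ, ∀ i ∈ s, 0 < M * l'' (x i) + μ' (x i) := by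
        refine ⟨∑ i ∈ s, (|μ' (x i)| + 1) / l'' (x i), fun i hi => ?_⟩
        have hpos : ∀ i ∈ s, 0 < l'' (x i) := hl'
        have h1 : (|μ' (x i)| + 1) / l'' (x i) ≤ ∑ i ∈ s, (|μ' (x i)| + 1) / l'' (x i) :=
          Finset.single_le_sum (f := fun i => (|μ' (x i)| + 1) / l'' (x i))
            (fun k hk => div_nonneg (by positivity) (hpos k hk).le) hi
        rw [div_le_iff₀ (hpos i hi)] at h1
        have := neg_abs_le (μ' (x i))
        linarith
      obtain ⟨M, hM⟩ := hM
      refine ⟨M • l'' + μ', fun i hi => ?_⟩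
      rcases Finset.mem_insert.mp hi with rfl | hi
      · simp [hl''j, hμ']
      · simpa using hM i hi
    · right
      have hmem : ∑ i ∈ s, c i • x i ∈ Z := by
        rw [← Submodule.Quotient.mk_eq_zero, ← Submodule.mkQ_apply, map_sum, ← hsum]
        simp
      obtain ⟨t, ht⟩ := Submodule.mem_span_singleton.mp hmem
      have h1 := congrArg l ht
      rw [map_smul, map_sum, smul_eq_mul] at h1
      have h2 : 0 < ∑ i ∈ s, l (c i • x i) := by
        refine Finset.sum_pos' (fun k hk => ?_) ⟨i, hi, ?_⟩
        · rw [map_smul, smul_eq_mul]; exact mul_nonneg (hc k) (hl k hk).le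
        · rw [map_smul, smul_eq_mul]; exact mul_pos hci (hl i hi)
      have ht0 : 0 ≤ -t := by
        by_contra hcon
        push Not at hcon hlj
        have : t * l (x j) ≤ 0 := mul_nonpos_of_nonneg_of_nonpos (by linarith) hlj
        linarith
      refine ⟨fun i => if i = j then -t else c i, extc c _ hc ht0,
        ⟨i, Finset.mem_insert_of_mem hi, ?_⟩, ?_⟩
      · dsimp only; rw [if_neg (by rintro rfl; exact hj hi)]; exact hci
      · rw [ext0, ← ht]; simp

/-- integer version relative to a subset -/
theorem sep {σ : Type*} [Fintype σ] [DecidableEq σ] (A S : Finset (σ →₀ ℕ)) (hSA : S ⊆ A) :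
    (∃ (L : (σ → ℚ) →ₗ[ℚ] ℚ) (c : ℚ), (∀ v ∈ S, L (fun i => (v i : ℚ)) = c) ∧
      ∀ v ∈ A, v ∉ S → L (fun i => (v i : ℚ)) < c) ∨
    ∃ d b : (σ →₀ ℕ) → ℕ, (∀ v, v ∉ S → d v = 0) ∧ ∑ v ∈ A, d v • v = ∑ v ∈ A, b v • v ∧
      ∑ v ∈ A, d v = ∑ v ∈ A, b v ∧ ∃ w ∈ A, w ∉ S ∧ 0 < b w := by
  classical
  let y : (σ →₀ ℕ) → (σ → ℚ) × ℚ := fun v => (fun i => (v i : ℚ), 1)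
  let Z := Submodule.span ℚ (y '' S)
  rcases gordan (A \ S) _ (fun v => Z.mkQ (y v)) with ⟨l, hl⟩ | ⟨c, hc, ⟨w, hw, hcw⟩, hsum⟩
  · left
    let l' : (σ → ℚ) × ℚ →ₗ[ℚ] ℚ := l.comp Z.mkQ
    have hadd : ∀ v, l' (y v) = l' (fun i => (v i : ℚ), 0) + l' (0, 1) := by
      intro v
      rw [← map_add]; simp [y]
    refine ⟨-(l'.comp (LinearMap.inl ℚ _ _)), l' (0, 1), fun v hv => ?_, fun v hv hvS => ?_⟩
    · have h1 : l' (y v) = 0 := by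
        have : Z.mkQ (y v) = 0 := by
          rw [Submodule.mkQ_apply, Submodule.Quotient.mk_eq_zero]
          exact Submodule.subset_span ⟨v, hv, rfl⟩
        simp only [l', LinearMap.comp_apply, this, map_zero]
      rw [hadd] at h1
      simp only [LinearMap.neg_apply, LinearMap.comp_apply, LinearMap.inl_apply]
      linarith
    · have h1 : 0 < l' (y v) := hl v (Finset.mem_sdiff.mpr ⟨hv, hvS⟩)
      rw [hadd] at h1
      simp only [LinearMap.neg_apply, LinearMap.comp_apply, LinearMap.inl_apply]
      linarith
  · right
    have hmem : ∑ v ∈ A \ S, c v • y v ∈ Z := by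
      rw [← Submodule.Quotient.mk_eq_zero, ← Submodule.mkQ_apply, map_sum, ← hsum]
      simp
    obtain ⟨e, he⟩ := (Submodule.mem_span_image_finset_iff_exists_fun ℚ).mp hmem
    let e' : (σ →₀ ℕ) → ℚ := fun v => if hv : v ∈ S then e ⟨v, hv⟩ else - c v
    have he' : ∑ v ∈ A, e' v • y v = 0 := by
      rw [← Finset.sum_sdiff hSA, ← Finset.sum_coe_sort S]
      have h1 : ∑ v ∈ A \ S, e' v • y v = - ∑ v ∈ A \ S, c v • y v := by
        rw [← Finset.sum_neg_distrib]
        refine Finset.sum_congr rfl fun v hv => ?_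
        simp only [e']
        rw [dif_neg (Finset.mem_sdiff.mp hv).2, neg_smul]
      have h2 : ∑ v : S, e' v • y v = ∑ v : S, e v • y v := by
        refine Finset.sum_congr rfl fun v _ => ?_
        simp only [e']
        rw [dif_pos v.2]
      rw [h1, h2, he]; simp
    -- clear denominators
    let D : ℕ := ∏ v ∈ A, (e' v).den
    have hD : 0 < D := Finset.prod_pos fun v _ => (e' v).den_pos
    have h_integral : ∀ v ∈ A, ∃ z : ℤ, (z : ℚ) = D * e' v := by
      intro v hv
      obtain ⟨k, hk⟩ := Finset.dvd_prod_of_mem (fun v => (e' v).den) hv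
      refine ⟨k * (e' v).num, ?_⟩
      have h3 : (e' v) * (e' v).den = (e' v).num := Rat.mul_den_eq_num _
      have h4 : (D : ℚ) = (e' v).den * k := by exact_mod_cast hk
      rw [h4]; push_cast; rw [← h3]; ring
    choose! z hz using h_integral
    have hzs : ∑ v ∈ A, (z v : ℚ) • y v = 0 := by
      have : ∑ v ∈ A, (z v : ℚ) • y v = (D : ℚ) • ∑ v ∈ A, e' v • y v := by
        rw [Finset.smul_sum]
        exact Finset.sum_congr rfl fun v hv => by rw [hz v hv, mul_smul]
      rw [this, he', smul_zero]
    have hzneg : ∀ v ∈ A, v ∉ S → z v ≤ 0 := by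
      intro v hv hvS
      have h1 : (z v : ℚ) ≤ 0 := by
        rw [hz v hv]
        have h2 : e' v = - c v := dif_neg hvS
        rw [h2]
        have := hc v
        have h3 : (0 : ℚ) ≤ D := Nat.cast_nonneg _
        nlinarith
      exact_mod_cast h1
    have hwA := (Finset.mem_sdiff.mp hw).1
    have hwS := (Finset.mem_sdiff.mp hw).2
    have hzw : z w < 0 := by
      have h1 : (z w : ℚ) < 0 := by
        rw [hz w hwA]
        have h2 : e' w = - c w := dif_neg hwS
        rw [h2]
        have h3 : (0 : ℚ) < D := Nat.cast_pos.mpr hD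
        nlinarith
      exact_mod_cast h1
    have hsplit : ∀ a : ℤ, (a.toNat : ℚ) = a + ((-a).toNat : ℚ) := by
      intro a
      have : (a.toNat : ℤ) = a + ((-a).toNat : ℤ) := by omega
      exact_mod_cast this
    have hmain : ∑ v ∈ A, ((z v).toNat : ℚ) • y v = ∑ v ∈ A, ((-z v).toNat : ℚ) • y v := by
      simp_rw [hsplit (z _), add_smul, Finset.sum_add_distrib]
      rw [hzs, zero_add]
    refine ⟨fun v => if v ∈ S then (z v).toNat else 0, fun v => (-z v).toNat,
      fun v hv => if_neg hv, ?_, ?_, w, hwA, hwS, by dsimp only; omega⟩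
    all_goals
      have hif : ∀ v ∈ A, (if v ∈ S then (z v).toNat else 0) = (z v).toNat := by
        intro v hv
        split_ifs with h
        · rfl
        · have := hzneg v hv h; omega
    · rw [Finset.sum_congr rfl fun v hv => congrArg (· • v) (hif v hv)]
      dsimp only
      ext i
      have h1 := congrFun (congrArg Prod.fst hmain) i
      simp only [Prod.fst_sum, Prod.smul_fst, Finset.sum_apply, Pi.smul_apply, smul_eq_mul, y] at h1
      simp only [Finsupp.finsetSum_apply, Finsupp.smul_apply, smul_eq_mul]
      exact_mod_cast h1
    · rw [Finset.sum_congr rfl hif]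
      have h1 := congrArg Prod.snd hmain
      simp only [Prod.snd_sum, Prod.smul_snd, smul_eq_mul, mul_one, y] at h1
      exact_mod_cast h1

end TNProof

namespace TNProof

noncomputable def divCx : DivisibleBy (Additive ℂˣ) ℤ := by
  refine divisibleByOfSMulRightSurj _ _ ?_
  intro n hn x
  have : ∃ y : ℂˣ, y ^ n = x.toMul := by
    have key : ∀ k : ℕ, 0 < k → ∀ x : ℂˣ, ∃ y : ℂˣ, y ^ k = x := by
      intro k hk x
      obtain ⟨z, hz⟩ := IsAlgClosed.exists_pow_nat_eq (x : ℂ) hk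
      have hz0 : z ≠ 0 := by
        rintro rfl
        rw [zero_pow hk.ne'] at hz
        exact x.ne_zero hz.symm
      exact ⟨Units.mk0 z hz0, Units.ext (by simpa using hz)⟩
    rcases Int.eq_nat_or_neg n with ⟨k, rfl | rfl⟩
    · obtain ⟨y, hy⟩ := key k (by omega) x.toMul
      exact ⟨y, by simpa using hy⟩
    · obtain ⟨y, hy⟩ := key k (by omega) x.toMul
      exact ⟨y⁻¹, by simpa using hy⟩
  obtain ⟨y, hy⟩ := this
  exact ⟨Additive.ofMul y, by change Additive.ofMul (y ^ n) = x; rw [hy]; rfl⟩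

theorem torus {σ : Type*} [Fintype σ] [DecidableEq σ] (S : Finset (σ →₀ ℕ)) (χ : (σ →₀ ℕ) → ℂ)
    (hχ : ∀ v ∈ S, χ v ≠ 0)
    (hrel : ∀ d b : (σ →₀ ℕ) → ℕ, ∑ v ∈ S, d v • v = ∑ v ∈ S, b v • v →
      ∏ v ∈ S, χ v ^ d v = ∏ v ∈ S, χ v ^ b v) :
    ∃ x : σ → ℂ, (∀ i, x i ≠ 0) ∧ ∀ v ∈ S, ∏ i, x i ^ v i = χ v := by
  classical
  let _ := divCx
  have hB : Module.Baer ℤ (Additive ℂˣ) := Module.Baer.of_divisible _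
  let Φ : (S → ℤ) →ₗ[ℤ] (σ → ℤ) := Fintype.linearCombination ℤ (fun v : S => fun i => ((v : σ →₀ ℕ) i : ℤ))
  let Ψ : (S → ℤ) →ₗ[ℤ] Additive ℂˣ :=
    Fintype.linearCombination ℤ (fun v : S => Additive.ofMul (Units.mk0 (χ v) (hχ v v.2)))
  have hker : LinearMap.ker Φ ≤ LinearMap.ker Ψ := by
    intro z hz
    rw [LinearMap.mem_ker] at hz ⊢
    let d : (σ →₀ ℕ) → ℕ := fun v => if hv : v ∈ S then (z ⟨v, hv⟩).toNat else 0
    let b : (σ →₀ ℕ) → ℕ := fun v => if hv : v ∈ S then (-z ⟨v, hv⟩).toNat else 0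
    have hd : ∀ v : S, d v = (z v).toNat := fun v => dif_pos v.2
    have hb : ∀ v : S, b v = (-z v).toNat := fun v => dif_pos v.2
    have h1 := hrel d b (by
      ext i
      have h2 := congrFun hz i
      simp only [Φ, Fintype.linearCombination_apply, Finset.sum_apply, Pi.smul_apply,
        smul_eq_mul, Pi.zero_apply] at h2
      simp only [Finsupp.finsetSum_apply, Finsupp.smul_apply, smul_eq_mul]
      rw [← Finset.sum_coe_sort S, ← Finset.sum_coe_sort S]
      have h3 : ∑ v : S, ((d v * (v : σ →₀ ℕ) i : ℕ) : ℤ) =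
          ∑ v : S, ((b v * (v : σ →₀ ℕ) i : ℕ) : ℤ) := by
        rw [← sub_eq_zero, ← Finset.sum_sub_distrib, ← h2]
        refine Finset.sum_congr rfl fun v _ => ?_
        rw [hd, hb]; push_cast
        rw [← sub_mul]
        congr 1
        omega
      exact_mod_cast h3)
    rw [← Finset.prod_coe_sort S, ← Finset.prod_coe_sort S] at h1
    have h4 : ∏ v : S, (Units.mk0 (χ v) (hχ v v.2)) ^ d v = ∏ v : S, (Units.mk0 (χ v) (hχ v v.2)) ^ b v := by
      apply Units.ext
      push_cast
      simpa using h1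
    have h5 : ∏ v : S, (Units.mk0 (χ v) (hχ v v.2)) ^ z v = 1 := by
      have h6 : ∀ v : S, z v = (d v : ℤ) - (b v : ℤ) := by
        intro v; rw [hd, hb]; omega
      simp_rw [h6, zpow_sub, Finset.prod_mul_distrib, zpow_natCast]
      rw [h4, ← Finset.prod_mul_distrib]
      simp
    change Ψ z = Additive.ofMul 1
    rw [← h5, ofMul_prod]
    simp only [Ψ, Fintype.linearCombination_apply]
    rfl
  obtain ⟨g, hg⟩ := hB.extension_property ((LinearMap.ker Φ).liftQ Φ le_rfl)
    (LinearMap.ker_eq_bot.mp (Submodule.ker_liftQ_eq_bot _ _ _ le_rfl)) ((LinearMap.ker Φ).liftQ Ψ hker)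
  have hg' : ∀ z, g (Φ z) = Ψ z := by
    intro z
    have := LinearMap.congr_fun hg (Submodule.Quotient.mk z)
    simpa using this
  refine ⟨fun i => ((g (Pi.single i 1)).toMul : ℂˣ), fun i => Units.ne_zero _, fun v hv => ?_⟩
  have h1 := hg' (Pi.single ⟨v, hv⟩ 1)
  have h2 : Φ (Pi.single ⟨v, hv⟩ 1) = ∑ i, (v i : ℤ) • (Pi.single i 1 : σ → ℤ) := by
    simp only [Φ, Fintype.linearCombination_apply_single, one_smul]
    ext k
    simp [Finset.sum_apply, Pi.single_apply]
  have h3 : Ψ (Pi.single ⟨v, hv⟩ 1) = Additive.ofMul (Units.mk0 (χ v) (hχ v hv)) := by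
    simp only [Ψ, Fintype.linearCombination_apply_single, one_smul]
  rw [h2, h3, map_sum] at h1
  have h4 := congrArg (fun t : Additive ℂˣ => ((t.toMul : ℂˣ) : ℂ)) h1
  simp only [map_smul, toMul_sum, toMul_zsmul, zpow_natCast, Units.coe_prod, Units.val_pow_eq_pow_val,
    toMul_ofMul, Units.val_mk0] at h4
  exact h4

end TNProof

namespace TNProof

section cone
variable {σ τ : Type*} [Fintype τ] {ν : (σ →₀ ℕ) → ℝ} {V : Finset (σ →₀ ℕ)}

/-- degree-`e` part of the toric substitution `y_v ↦ u^v` -/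
noncomputable def PiE (V : Finset (σ →₀ ℕ)) (e : ℕ) : MvPolynomial V ℂ →ₗ[ℂ] MvPolynomial σ ℂ :=
  (basisMonomials V ℂ).constr ℂ
    (fun d => if ∑ v, d v = e then monomial (∑ v : V, d v • v.1) (1 : ℂ) else 0)

lemma PiE_monomial (e : ℕ) (d : V →₀ ℕ) (c : ℂ) : PiE V e (monomial d c) =
    if ∑ v, d v = e then monomial (∑ v : V, d v • v.1) c else 0 := by
  have h1 : (monomial d c : MvPolynomial V ℂ) = c • basisMonomials V ℂ d := by
    rw [coe_basisMonomials, smul_monomial]; simp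
  rw [h1, map_smul, PiE, Module.Basis.constr_basis]
  split_ifs
  · rw [smul_monomial]; simp
  · simp

lemma PiE_X_succ (e : ℕ) (v : V) (q : MvPolynomial V ℂ) :
    PiE V (e + 1) (X v * q) = monomial v.1 1 * PiE V e q := by
  classical
  induction q using MvPolynomial.induction_on' with
  | monomial d c =>
    have h1 : (X v : MvPolynomial V ℂ) * monomial d c = monomial (Finsupp.single v 1 + d) c := by
      rw [X, monomial_mul, one_mul]
    rw [h1, PiE_monomial, PiE_monomial]
    have h2 : ∑ w, (Finsupp.single v 1 + d : V →₀ ℕ) w = (∑ w, d w) + 1 := by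
      simp [Finset.sum_add_distrib, Finsupp.single_apply, add_comm]
    have h3 : ∑ w : V, (Finsupp.single v 1 + d : V →₀ ℕ) w • w.1 = v.1 + ∑ w : V, d w • w.1 := by
      simp [add_smul, Finset.sum_add_distrib, Finsupp.single_apply, ite_smul]
    rw [h2, h3]
    by_cases h : ∑ w, d w = e
    · rw [if_pos h, if_pos (by omega), monomial_mul, one_mul]
    · rw [if_neg h, if_neg (by omega), mul_zero]
  | add p q hp hq => rw [mul_add, map_add, map_add, mul_add, hp, hq]

lemma PiE_X_zero (v : V) (q : MvPolynomial V ℂ) : PiE V 0 (X v * q) = 0 := by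
  classical
  induction q using MvPolynomial.induction_on' with
  | monomial d c =>
    have h1 : (X v : MvPolynomial V ℂ) * monomial d c = monomial (Finsupp.single v 1 + d) c := by
      rw [X, monomial_mul, one_mul]
    rw [h1, PiE_monomial]
    have h2 : ∑ w, (Finsupp.single v 1 + d : V →₀ ℕ) w = (∑ w, d w) + 1 := by
      simp [Finset.sum_add_distrib, Finsupp.single_apply, add_comm]
    rw [h2, if_neg (by omega)]
  | add p q hp hq => rw [mul_add, map_add, hp, hq, add_zero]

/-- leading-form relations in degree `e` -/
noncomputable def HH (ν : (σ →₀ ℕ) → ℝ) (h : τ → MvPolynomial σ ℂ) (e : ℝ) : Submodule ℂ (MvPolynomial σ ℂ) :=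
  FNlt ℂ ν e ⊔ WW ν h Finset.univ (e - 1)

lemma mul_HH (hν : NuData ν V) {h : τ → MvPolynomial σ ℂ} {e : ℝ} {v : σ →₀ ℕ} (hv : v ∈ V)
    {x : MvPolynomial σ ℂ} (hx : x ∈ HH ν h e) : monomial v 1 * x ∈ HH ν h (e + 1) := by
  have hm : monomial v (1 : ℂ) ∈ FN ℂ ν 1 := monomial_mem_SN (show ν v ≤ 1 from (hν.vone v hv).le) 1
  obtain ⟨a, ha, b, hb, rfl⟩ := Submodule.mem_sup.mp hx
  rw [mul_add]
  refine Submodule.add_mem_sup ?_ ?_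
  · have := mul_mem_FNlt hν hm ha
    rwa [add_comm] at this
  · have := mul_WW hν hm hb
    rwa [show (1 : ℝ) + (e - 1) = e + 1 - 1 by ring] at this

/-- the ideal of the cone -/
noncomputable def II (hν : NuData ν V) (h : τ → MvPolynomial σ ℂ) : Ideal (MvPolynomial V ℂ) where
  carrier := {q | ∀ e : ℕ, PiE V e q ∈ HH ν h e}
  zero_mem' := fun e => by rw [map_zero]; exact Submodule.zero_mem _
  add_mem' := fun ha hb e => by rw [map_add]; exact Submodule.add_mem _ (ha e) (hb e)
  smul_mem' := by
    intro c
    induction c using MvPolynomial.induction_on with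
    | C a =>
      intro q hq e
      rw [smul_eq_mul, ← smul_eq_C_mul, map_smul]
      exact Submodule.smul_mem _ _ (hq e)
    | add p r hp hr =>
      intro q hq e
      rw [add_smul, map_add]
      exact Submodule.add_mem _ (hp hq e) (hr hq e)
    | mul_X p v hp =>
      intro q hq e
      have h1 : (p * X v) • q = X v * (p • q) := by
        rw [smul_eq_mul, smul_eq_mul]; ring
      rw [h1]
      cases e with
      | zero => rw [PiE_X_zero]; exact Submodule.zero_mem _
      | succ e =>
        rw [PiE_X_succ]
        have := mul_HH hν v.2 (hp hq e)
        push_cast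
        exact this

lemma mem_II {hν : NuData ν V} {h : τ → MvPolynomial σ ℂ} {q : MvPolynomial V ℂ} :
    q ∈ II hν h ↔ ∀ e : ℕ, PiE V e q ∈ HH ν h e := Iff.rfl

/-- restrict an exponent function -/
noncomputable def rs (V : Finset (σ →₀ ℕ)) (d : (σ →₀ ℕ) → ℕ) : V →₀ ℕ :=
  Finsupp.equivFunOnFinite.symm fun v => d v.1

lemma rs_apply (d : (σ →₀ ℕ) → ℕ) (v : V) : rs V d v = d v.1 := rfl

lemma PiE_rs (e : ℕ) (d : (σ →₀ ℕ) → ℕ) : PiE V e (monomial (rs V d) 1) =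
    if ∑ v ∈ V, d v = e then monomial (∑ v ∈ V, d v • v) 1 else 0 := by
  have e1 : ∑ v, rs V d v = ∑ v ∈ V, d v := Finset.sum_coe_sort V (fun v => d v)
  have e2 : ∑ v : V, rs V d v • v.1 = ∑ v ∈ V, d v • v := Finset.sum_coe_sort V (fun v => d v • v)
  rw [PiE_monomial, e1, e2]

lemma eval_rs (χ : V → ℂ) (d : (σ →₀ ℕ) → ℕ) :
    eval χ (monomial (rs V d) 1) = ∏ v : V, χ v ^ d v.1 := by
  rw [eval_monomial, one_mul, Finsupp.prod_fintype _ _ (fun _ => pow_zero _)]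
  rfl

lemma diff_mem_II (hν : NuData ν V) (h : τ → MvPolynomial σ ℂ) (d b : (σ →₀ ℕ) → ℕ)
    (h1 : ∑ v ∈ V, d v • v = ∑ v ∈ V, b v • v) (h2 : ∑ v ∈ V, d v = ∑ v ∈ V, b v) :
    monomial (rs V d) 1 - monomial (rs V b) 1 ∈ II hν h := by
  intro e
  rw [map_sub, PiE_rs, PiE_rs, h1, h2, sub_self]
  exact Submodule.zero_mem _

lemma lt_mem_II (hν : NuData ν V) (h : τ → MvPolynomial σ ℂ) (d : (σ →₀ ℕ) → ℕ)
    (h1 : ν (∑ v ∈ V, d v • v) < ∑ v ∈ V, (d v : ℝ)) :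
    monomial (rs V d) 1 ∈ II hν h := by
  intro e
  rw [PiE_rs]
  split_ifs with he
  · refine Submodule.mem_sup_left (monomial_mem_SN ?_ 1)
    have : ((∑ v ∈ V, d v : ℕ) : ℝ) = e := by rw [he]
    push_cast at this
    rw [this] at h1
    exact h1
  · exact Submodule.zero_mem _

lemma finV_of_zeros (hν : NuData ν V) (h : τ → MvPolynomial σ ℂ)
    (hz : ∀ χ : V → ℂ, (∀ q ∈ II hν h, eval χ q = 0) → ∀ v, χ v = 0) :
    ∃ N, FinV ν V h N := by
  have h1 : ∀ v : V, ∃ k : ℕ, (X v : MvPolynomial V ℂ) ^ k ∈ II hν h := by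
    intro v
    have : (X v : MvPolynomial V ℂ) ∈ (II hν h).radical := by
      rw [← vanishingIdeal_zeroLocus_eq_radical (K := ℂ) (II hν h), mem_vanishingIdeal_iff]
      intro χ hχ
      rw [aeval_X]
      refine hz χ (fun q hq => ?_) v
      have := (mem_zeroLocus_iff.mp hχ) q hq
      rwa [aeval_eq_eval] at this
    exact this
  choose k hk using h1
  refine ⟨∑ v, k v, fun v hv => ?_⟩
  set N := ∑ v, k v with hN
  have h2 : (X ⟨v, hv⟩ : MvPolynomial V ℂ) ^ N ∈ II hν h :=
    Ideal.pow_mem_of_pow_mem _ (hk ⟨v, hv⟩)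
      (Finset.single_le_sum (f := k) (fun _ _ => Nat.zero_le _) (Finset.mem_univ _))
  have h3 := h2 N
  classical
  rw [X_pow_eq_monomial, PiE_monomial] at h3
  have e1 : ∑ w, (Finsupp.single (⟨v, hv⟩ : V) N) w = N := by
    simp [Finsupp.single_apply]
  have e2 : ∑ w : V, (Finsupp.single (⟨v, hv⟩ : V) N) w • w.1 = N • v := by
    simp [Finsupp.single_apply, ite_smul]
  rw [if_pos e1, e2] at h3
  obtain ⟨a, ha, b, ⟨s, hs, rfl⟩, hab⟩ := Submodule.mem_sup.mp h3
  refine ⟨s, hs, ?_⟩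
  rw [← hab, add_sub_cancel_right]
  exact ha

end cone

end TNProof

namespace TNProof
open ToricNewton

section nondeg
variable {σ : Type*} [Fintype σ] [DecidableEq σ]

lemma coeff_hh (f : MvPolynomial σ ℂ) (i : σ) (m : σ →₀ ℕ) :
    coeff m (X i * pderiv i f) = (m i : ℂ) * coeff m f := by
  classical
  induction f using MvPolynomial.induction_on' with
  | monomial s a =>
    rw [X_mul_pderiv_monomial, coeff_smul, coeff_monomial, nsmul_eq_mul]
    split_ifs with h
    · rw [h]
    · simp
  | add p q hp hq => rw [map_add, mul_add, coeff_add, hp, hq, coeff_add, mul_add]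

lemma supp_hh (f : MvPolynomial σ ℂ) (i : σ) : (X i * pderiv i f).support ⊆ f.support := by
  intro m hm
  rw [mem_support_iff, coeff_hh] at hm
  exact mem_support_iff.mpr (right_ne_zero_of_mul hm)

lemma hh_mem (f : MvPolynomial σ ℂ) (hf : Convenient f) (i : σ) :
    X i * pderiv i f ∈ FN ℂ (nn f) 1 :=
  fun _ hm => nn_vert hf (supp_hh f i hm)

lemma hh_eq (f : MvPolynomial σ ℂ) (i : σ) :
    X i * pderiv i f = ∑ v ∈ f.support, monomial v ((v i : ℂ) * coeff v f) := by
  classical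
  ext m
  rw [coeff_hh, coeff_sum]
  simp only [coeff_monomial]
  rw [Finset.sum_ite_eq']
  split_ifs with h
  · rfl
  · rw [notMem_support_iff.mp h, mul_zero]

/-- lifted leading forms -/
noncomputable def FF (f : MvPolynomial σ ℂ) (i : σ) : MvPolynomial (VV f) ℂ :=
  ∑ v : VV f, monomial (Finsupp.single v 1) ((v.1 i : ℂ) * coeff v.1 f)

lemma VV_sub (f : MvPolynomial σ ℂ) : VV f ⊆ f.support := fun _ hv => (mem_VV.mp hv).1

lemma FF_mem (f : MvPolynomial σ ℂ) (hf : Convenient f) (i : σ) :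
    FF f i ∈ II (nuData hf) (fun i => X i * pderiv i f) := by
  classical
  intro e
  rw [FF, map_sum]
  have e1 : ∀ v : VV f, ∑ w, (Finsupp.single v 1 : VV f →₀ ℕ) w = 1 := by
    intro v; simp [Finsupp.single_apply]
  have e2 : ∀ v : VV f, ∑ w : VV f, (Finsupp.single v 1 : VV f →₀ ℕ) w • w.1 = v.1 := by
    intro v; simp [Finsupp.single_apply, ite_smul]
  simp_rw [PiE_monomial, e1, e2]
  by_cases he : 1 = e
  · subst he
    simp only [if_true]
    rw [Finset.sum_coe_sort (VV f) (fun v => monomial v ((v i : ℂ) * coeff v f))]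
    have h1 : ∑ v ∈ VV f, monomial v ((v i : ℂ) * coeff v f) =
        - ∑ v ∈ f.support \ VV f, monomial v ((v i : ℂ) * coeff v f) + (X i * pderiv i f) * 1 := by
      rw [hh_eq, ← Finset.sum_sdiff (VV_sub f)]
      ring
    rw [h1]
    refine Submodule.add_mem_sup ?_ ?_
    · refine Submodule.neg_mem _ (Submodule.sum_mem _ fun v hv => monomial_mem_SN ?_ _)
      rw [Finset.mem_sdiff, mem_VV] at hv
      have h2 := nn_vert hf hv.1
      have h3 : nn f v ≠ 1 := fun h => hv.2 ⟨hv.1, h⟩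
      change nn f v < ((1 : ℕ) : ℝ)
      rw [Nat.cast_one]
      exact lt_of_le_of_ne h2 h3
    · refine mul_mem_WW (h := fun i => X i * pderiv i f) (Finset.mem_univ i) ?_
      have := one_mem_FN (K := ℂ) (nuData hf)
      simpa using this
  · simp only [if_neg he, Finset.sum_const_zero]
    exact Submodule.zero_mem _

lemma NuData.sum_le' {ν : (σ →₀ ℕ) → ℝ} {V : Finset (σ →₀ ℕ)} (hν : NuData ν V)
    (A : Finset (σ →₀ ℕ)) (b : (σ →₀ ℕ) → ℕ) :
    ν (∑ v ∈ A, b v • v) ≤ ∑ v ∈ A, (b v : ℝ) * ν v := by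
  have h1 : ∀ (k : ℕ) (v : σ →₀ ℕ), ν (k • v) ≤ k * ν v := by
    intro k v
    induction k with
    | zero => simp [hν.zero]
    | succ k ih =>
      rw [succ_nsmul]
      refine (hν.sub _ _).trans ?_
      push_cast
      linarith
  refine (Finset.le_sum_of_subadditive ν hν.zero.le hν.sub A _).trans ?_
  exact Finset.sum_le_sum fun v _ => h1 _ _

theorem zeros (f : MvPolynomial σ ℂ) (hf : Convenient f) (hnd : Nondegenerate f)
    (χ : VV f → ℂ)
    (hχ : ∀ q ∈ II (nuData hf) (fun i => X i * pderiv i f), eval χ q = 0) : ∀ v, χ v = 0 := by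
  classical
  by_contra! hcon
  obtain ⟨v0, hv0⟩ := hcon
  have hν := nuData hf
  let χ' : (σ →₀ ℕ) → ℂ := fun v => if hv : v ∈ VV f then χ ⟨v, hv⟩ else 0
  have hχ' : ∀ v : VV f, χ v = χ' v.1 := fun v => by simp only [χ']; rw [dif_pos v.2]
  have hev : ∀ d : (σ →₀ ℕ) → ℕ, eval χ (monomial (rs (VV f) d) 1) = ∏ v ∈ VV f, χ' v ^ d v := by
    intro d
    rw [eval_rs, ← Finset.prod_coe_sort (VV f)]
    exact Finset.prod_congr rfl fun v _ => by rw [hχ']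
  have hdiff : ∀ d b : (σ →₀ ℕ) → ℕ, ∑ v ∈ VV f, d v • v = ∑ v ∈ VV f, b v • v →
      ∑ v ∈ VV f, d v = ∑ v ∈ VV f, b v → ∏ v ∈ VV f, χ' v ^ d v = ∏ v ∈ VV f, χ' v ^ b v := by
    intro d b h1 h2
    have := hχ _ (diff_mem_II (nuData hf) _ d b h1 h2)
    rw [map_sub, hev, hev] at this
    exact sub_eq_zero.mp this
  let S := (VV f).filter fun v => χ' v ≠ 0
  have hSV : S ⊆ VV f := Finset.filter_subset _ _
  have hS0 : ∀ v, v ∉ S → χ' v = 0 := by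
    intro v hv
    by_cases hvV : v ∈ VV f
    · by_contra h
      exact hv (Finset.mem_filter.mpr ⟨hvV, h⟩)
    · simp only [χ']; rw [dif_neg hvV]
  have hS1 : ∀ v ∈ S, χ' v ≠ 0 := fun v hv => (Finset.mem_filter.mp hv).2
  have hv0S : v0.1 ∈ S := Finset.mem_filter.mpr ⟨v0.2, by rw [← hχ']; exact hv0⟩
  have hz0 : (0 : σ →₀ ℕ) ∉ VV f := by
    intro h
    have := (mem_VV.mp h).2
    rw [hν.zero] at this
    exact zero_ne_one this
  let A := insert 0 f.support
  have hVA : VV f ⊆ A := (VV_sub f).trans (Finset.subset_insert _ _)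
  rcases sep A S (hSV.trans hVA) with ⟨L, c, hL1, hL2⟩ | ⟨d, b, hd, hdb, hdb', w, hwA, hwS, hbw⟩
  · -- a supporting functional: use nondegeneracy
    let a : σ → ℝ := fun i => ((L (fun j => if i = j then 1 else 0) : ℚ) : ℝ)
    let l : (σ → ℝ) →ₗ[ℝ] ℝ := ∑ i, a i • LinearMap.proj i
    have hl : ∀ v : σ →₀ ℕ, l (toR v) = ((L (fun i => (v i : ℚ)) : ℚ) : ℝ) := by
      intro v
      rw [LinearMap.pi_apply_eq_sum_univ L]
      simp only [l, LinearMap.sum_apply, LinearMap.smul_apply, LinearMap.proj_apply, toR, a,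
        smul_eq_mul]
      push_cast
      exact Finset.sum_congr rfl fun i _ => mul_comm _ _
    have hc : 0 < c := by
      have := hL2 0 (Finset.mem_insert_self _ _) (fun h => hz0 (hSV h))
      have h0 : (fun i => (((0 : σ →₀ ℕ) i : ℕ) : ℚ)) = (0 : σ → ℚ) := by ext; simp
      rwa [h0, map_zero] at this
    have hcR : (0 : ℝ) < (c : ℝ) := by exact_mod_cast hc
    have hlS : ∀ v ∈ S, l (toR v) = c := fun v hv => by rw [hl, hL1 v hv]
    have hlA : ∀ v ∈ f.support, v ∉ S → l (toR v) < c := fun v hv hvS => by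
      rw [hl]; exact_mod_cast hL2 v (Finset.mem_insert_of_mem hv) hvS
    have hmemP : ∀ v ∈ f.support, toR v ∈ newtonPolytope f := fun v hv =>
      subset_convexHull _ _ (Or.inr ⟨v, hv, rfl⟩)
    let Δ : Set (σ → ℝ) := {x ∈ newtonPolytope f | l x = c}
    have hΔ : ∀ v ∈ f.support, (toR v ∈ Δ ↔ v ∈ S) := by
      intro v hv
      constructor
      · rintro ⟨-, h⟩
        by_contra hvS
        exact (hlA v hv hvS).ne h
      · intro h
        exact ⟨hmemP v hv, hlS v h⟩
    have hface : NBFace f Δ := by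
      refine ⟨⟨⟨toR v0.1, (hΔ _ (VV_sub f v0.2)).mpr hv0S⟩, l, c, ?_, rfl⟩, ?_⟩
      · intro x hx
        have : newtonPolytope f ⊆ {x | l x ≤ (c : ℝ)} := by
          refine convexHull_min ?_ (convex_halfSpace_le l.isLinear _)
          rintro y (hy | ⟨v, hv, rfl⟩)
          · rw [Set.mem_singleton_iff] at hy
            subst hy
            simpa using hcR.le
          · by_cases hvS : v ∈ S
            · exact (hlS v hvS).le
            · exact (hlA v hv hvS).le
        exact this hx
      · rintro ⟨-, h⟩
        rw [map_zero] at h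
        exact hcR.ne h
    obtain ⟨x, hx0, hx⟩ := torus S χ' hS1 (by
      intro d b hdb
      have hLd : ∀ d : (σ →₀ ℕ) → ℕ, l (toR (∑ v ∈ S, d v • v)) = (∑ v ∈ S, (d v : ℝ)) * c := by
        intro d
        have : toR (∑ v ∈ S, d v • v) = ∑ v ∈ S, (d v : ℝ) • toR v := by
          ext i; simp [toR, Finsupp.finsetSum_apply]
        rw [this, map_sum, Finset.sum_mul]
        exact Finset.sum_congr rfl fun v hv => by rw [map_smul, hlS v hv, smul_eq_mul]
      have hsum : ∑ v ∈ S, d v = ∑ v ∈ S, b v := by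
        have h1 := hLd d
        rw [hdb, hLd b] at h1
        have h2 := mul_right_cancel₀ hcR.ne' h1
        exact_mod_cast h2.symm
      have hres : ∀ d : (σ →₀ ℕ) → ℕ,
          ∑ v ∈ VV f, (if v ∈ S then d v else 0) • v = ∑ v ∈ S, d v • v ∧
          ∑ v ∈ VV f, (if v ∈ S then d v else 0) = ∑ v ∈ S, d v ∧
          ∏ v ∈ VV f, χ' v ^ (if v ∈ S then d v else 0) = ∏ v ∈ S, χ' v ^ d v := by
        intro d
        refine ⟨?_, ?_, ?_⟩
        · rw [← Finset.sum_subset hSV (fun v _ hv => by rw [if_neg hv, zero_smul])]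
          exact Finset.sum_congr rfl fun v hv => by rw [if_pos hv]
        · rw [← Finset.sum_subset hSV (fun v _ hv => by rw [if_neg hv])]
          exact Finset.sum_congr rfl fun v hv => by rw [if_pos hv]
        · rw [← Finset.prod_subset hSV (fun v _ hv => by rw [if_neg hv, pow_zero])]
          exact Finset.prod_congr rfl fun v hv => by rw [if_pos hv]
      have := hdiff (fun v => if v ∈ S then d v else 0) (fun v => if v ∈ S then b v else 0)
        (by rw [(hres d).1, (hres b).1, hdb]) (by rw [(hres d).2.1, (hres b).2.1, hsum])
      rwa [(hres d).2.2, (hres b).2.2] at this)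
    refine hnd Δ hface ⟨x, hx0, fun i => ?_⟩
    have hF := hχ _ (FF_mem f hf i)
    rw [FF, map_sum] at hF
    have hF' : ∑ v ∈ VV f, (v i : ℂ) * coeff v f * χ' v = 0 := by
      rw [← hF, ← Finset.sum_coe_sort (VV f)]
      refine Finset.sum_congr rfl fun v _ => ?_
      rw [eval_monomial, ← hχ' v, Finsupp.prod_single_index (h := fun n e => χ n ^ e) (pow_zero _), pow_one]
    rw [← hF', ← Finset.sum_subset hSV (fun v _ hv => by rw [hS0 v hv, mul_zero]),
      faceRestrict, map_sum,
      Finset.sum_subset (supp_hh f i) (fun v _ hv => by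
        rw [notMem_support_iff.mp hv]; simp),
      Finset.sum_subset (hSV.trans (VV_sub f)) (f := fun v => (v i : ℂ) * coeff v f * χ' v)
        (fun v _ hv => by rw [hS0 v hv, mul_zero])]
    refine Finset.sum_congr rfl fun v hv => ?_
    by_cases hvS : v ∈ S
    · rw [if_pos ((hΔ v hv).mpr hvS), eval_monomial, coeff_hh, ← hx v hvS,
        Finsupp.prod_fintype _ _ (fun _ => pow_zero _)]
    · rw [if_neg (fun h => hvS ((hΔ v hv).mp h)), map_zero, hS0 v hvS, mul_zero]
  · -- a relation
    have hdV : ∀ v, v ∉ VV f → d v = 0 := fun v hv => hd v fun h => hv (hSV h)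
    have e1 : ∑ v ∈ VV f, d v • v = ∑ v ∈ A, d v • v :=
      Finset.sum_subset hVA fun v _ hv => by rw [hdV v hv, zero_smul]
    have e2 : ∑ v ∈ VV f, d v = ∑ v ∈ A, d v :=
      Finset.sum_subset hVA fun v _ hv => hdV v hv
    have hne : ∏ v ∈ VV f, χ' v ^ d v ≠ 0 := by
      refine Finset.prod_ne_zero_iff.mpr fun v _ => ?_
      by_cases hvS : v ∈ S
      · exact pow_ne_zero _ (hS1 v hvS)
      · rw [hd v hvS, pow_zero]; exact one_ne_zero
    by_cases hlt : nn f (∑ v ∈ VV f, d v • v) < ∑ v ∈ VV f, (d v : ℝ)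
    · have := hχ _ (lt_mem_II (nuData hf) _ d hlt)
      rw [hev] at this
      exact hne this
    · push Not at hlt
      have hle1 : ∀ v ∈ A, nn f v ≤ 1 := by
        intro v hv
        rcases Finset.mem_insert.mp hv with rfl | hv
        · rw [hν.zero]; exact zero_le_one
        · exact nn_vert hf hv
      rw [e1, hdb] at hlt
      have h3 := hlt.trans (hν.sum_le' A b)
      have h4 : ∑ v ∈ VV f, (d v : ℝ) = ∑ v ∈ A, (b v : ℝ) := by
        have := e2.trans hdb'
        exact_mod_cast this
      rw [h4] at h3
      have h5 : ∀ v ∈ A, (b v : ℝ) * nn f v ≤ b v := fun v hv =>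
        mul_le_of_le_one_right (Nat.cast_nonneg _) (hle1 v hv)
      have h6 : ∀ v ∈ A, (b v : ℝ) * nn f v = b v :=
        (Finset.sum_eq_sum_iff_of_le h5).mp (le_antisymm (Finset.sum_le_sum h5) h3)
      have h7 : ∀ v ∈ A, 0 < b v → v ∈ VV f := by
        intro v hv hb
        have h8 : nn f v = 1 := by
          have h9 : (b v : ℝ) ≠ 0 := by positivity
          have := h6 v hv
          exact mul_left_cancel₀ h9 (by rw [this, mul_one])
        rcases Finset.mem_insert.mp hv with rfl | hv
        · rw [hν.zero] at h8
          exact absurd h8 zero_ne_one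
        · exact mem_VV.mpr ⟨hv, h8⟩
      have h8 : ∀ v ∈ A, v ∉ VV f → b v = 0 := fun v hv hvV => by
        by_contra h
        exact hvV (h7 v hv (Nat.pos_of_ne_zero h))
      have e3 : ∑ v ∈ VV f, b v • v = ∑ v ∈ A, b v • v :=
        Finset.sum_subset hVA fun v hv hvV => by rw [h8 v hv hvV, zero_smul]
      have e4 : ∑ v ∈ VV f, b v = ∑ v ∈ A, b v :=
        Finset.sum_subset hVA fun v hv hvV => h8 v hv hvV
      have := hdiff d b (by rw [e1, e3, hdb]) (by rw [e2, e4, hdb'])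
      rw [this] at hne
      exact hne (Finset.prod_eq_zero (h7 w hwA hbw) (by rw [hS0 w hwS, zero_pow hbw.ne']))

theorem exists_finV (f : MvPolynomial σ ℂ) (hf : Convenient f) (hnd : Nondegenerate f) :
    ∃ N, FinV (nn f) (VV f) (fun i => X i * pderiv i f) N :=
  finV_of_zeros (nuData hf) _ (zeros f hf hnd)

theorem UU_of (f : MvPolynomial σ ℂ) (hf : Convenient f) (hnd : Nondegenerate f) :
    UU (nn f) (fun i => X i * pderiv i f) := by
  obtain ⟨N, hN⟩ := exists_finV f hf hnd
  intro J α r hr s hs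
  exact regular_char0 (nuData hf) (hh_mem f hf) hN rfl J α r hr s hs

theorem main (f g : MvPolynomial σ ℂ) (hcf : Convenient f) (hnf : Nondegenerate f)
    (hcg : Convenient g) (hng : Nondegenerate g) (hP : newtonPolytope f = newtonPolytope g)
    (α : ℝ) : grDim f α = grDim g α := by
  have hnn : nn g = nn f := by
    funext m
    simp only [nn, nu, hP]
  have hg := nuData hcg
  have hgm := hh_mem g hcg
  have hgU := UU_of g hcg hng
  rw [hnn] at hg hgm hgU
  have key := gr_eq (nuData hcf) hg (hh_mem f hcf) hgm (UU_of f hcf hnf) hgU α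
  have e1 : Nle g α = FN ℂ (nn f) α := by rw [← hnn]; rfl
  have e2 : Nlt g α = FNlt ℂ (nn f) α := by rw [← hnn]; rfl
  have k2 : grDim g α = Module.finrank ℂ (Submodule.map
      (FNlt ℂ (nn f) α ⊔ (Ideal.span (Set.range fun i => X i * pderiv i g)).restrictScalars ℂ).mkQ
      (FN ℂ (nn f) α ⊔ (Ideal.span (Set.range fun i => X i * pderiv i g)).restrictScalars ℂ)) := by
    rw [← hnn]; rfl
  rw [k2, ← key]
  rfl

end nondeg
end TNProof


open ToricNewton in
/-- the toric Newton spectrum of a convenient and Newton nondegenerate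
polynomial depends only on its Newton polytope. -/
theorem toric_newton_spectrum_depends_only_on_polytope {n : ℕ} (hn : 1 ≤ n)
    (f g : MvPolynomial (Fin n) ℂ)
    (hcf : Convenient f) (hnf : Nondegenerate f)
    (hcg : Convenient g) (hng : Nondegenerate g)
    (hP : newtonPolytope f = newtonPolytope g) :
    ∀ α : ℚ, grDim f (α : ℝ) = grDim g (α : ℝ) := by
  intro α
  exact TNProof.main f g hcf hnf hcg hng hP (α : ℝ)
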